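/- Let Γ be a group, R a Γ-graded ring, and 𝒫 a gr-prime matrix ideal of R. Then there exist a Γ-graded division ring K and a homomorphism of Γ-graded rings φ : R → K such that (K, φ) is a Γ-graded epic R-division ring and 𝒫 = {A ∈ 𝔐(R) : A^φ is not invertible over K}. -/

import Mathlib

open Matrix

universe u v w

section GradedDefs

variable {Γ : Type u} [Group Γ] {R : Type v} [Ring R]

/-- `A` is a homogeneous matrix of distribution `(α, β)`:
its `(i,j)` entry lies in `𝒜 (α i * (β j)⁻¹)`. -/
def IsHomog (𝒜 : Γ → AddSubgroup R) {m n : ℕ}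
    (A : Matrix (Fin m) (Fin n) R) (α : Fin m → Γ) (β : Fin n → Γ) : Prop :=
  ∀ i j, A i j ∈ 𝒜 (α i * (β j)⁻¹)

/-- `A` is a homogeneous matrix for some distribution. -/
def IsHomogSq (𝒜 : Γ → AddSubgroup R) {m n : ℕ}
    (A : Matrix (Fin m) (Fin n) R) : Prop :=
  ∃ (α : Fin m → Γ) (β : Fin n → Γ), IsHomog 𝒜 A α β

end GradedDefs

/-- Square matrices over `R` of arbitrary finite size. -/
abbrev SqMat (R : Type v) : Type v := Σ n : ℕ, Matrix (Fin n) (Fin n) R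

section GradedDefs

variable {Γ : Type u} [Group Γ] {R : Type v} [Ring R]

/-- Diagonal sum `A ⊕ B` of two (rectangular) matrices. -/
def diagSum {m n m' n' : ℕ} (A : Matrix (Fin m) (Fin n) R)
    (B : Matrix (Fin m') (Fin n') R) : Matrix (Fin (m + m')) (Fin (n + n')) R :=
  Matrix.reindex finSumFinEquiv finSumFinEquiv (Matrix.fromBlocks A 0 0 B)

/-- Block lower triangular matrix `[[A, 0], [C, B]]`. -/
def lowerBlockSum {n m : ℕ} (A : Matrix (Fin n) (Fin n) R) (B : Matrix (Fin m) (Fin m) R)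
    (C : Matrix (Fin m) (Fin n) R) : Matrix (Fin (n + m)) (Fin (n + m)) R :=
  Matrix.reindex finSumFinEquiv finSumFinEquiv (Matrix.fromBlocks A 0 C B)

/-- Block upper triangular matrix `[[A, C], [0, B]]` with rectangular blocks. -/
def upperBlockSum {m n m' n' : ℕ} (A : Matrix (Fin m) (Fin n) R)
    (B : Matrix (Fin m') (Fin n') R) (C : Matrix (Fin m) (Fin n') R) :
    Matrix (Fin (m + m')) (Fin (n + n')) R :=
  Matrix.reindex finSumFinEquiv finSumFinEquiv (Matrix.fromBlocks A C 0 B)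

/-- `C` is the determinantal sum of `A` and `B` with respect to some column or row:
`A` and `B` agree away from that column (row) and the distinguished column (row) of `C`
is the sum of the corresponding columns (rows) of `A` and `B`. -/
def IsDetSum {n : ℕ} (A B C : Matrix (Fin n) (Fin n) R) : Prop :=
  (∃ c : Fin n, (∀ i j, j ≠ c → A i j = B i j) ∧
      ∀ i j, C i j = if j = c then A i j + B i j else A i j) ∨
  (∃ r : Fin n, (∀ i j, i ≠ r → A i j = B i j) ∧
      ∀ i j, C i j = if i = r then A i j + B i j else A i j)

/-- `C` is the determinantal sum of the homogeneous matrices `A` and `B`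
(which have a common distribution). -/
def GrDetSum (𝒜 : Γ → AddSubgroup R) {n : ℕ} (A B C : Matrix (Fin n) (Fin n) R) : Prop :=
  (∃ α β : Fin n → Γ, IsHomog 𝒜 A α β ∧ IsHomog 𝒜 B α β) ∧ IsDetSum A B C

/-- A square homogeneous matrix `A` is gr-full if whenever `A = P * Q` with `P`
homogeneous of distribution `(α, lam)` and `Q` homogeneous of distribution `(lam, β)`
where `lam` has length `r`, then `r ≥ n`. -/
def IsGrFull (𝒜 : Γ → AddSubgroup R) {n : ℕ} (A : Matrix (Fin n) (Fin n) R) : Prop :=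
  ∀ (r : ℕ) (P : Matrix (Fin n) (Fin r) R) (Q : Matrix (Fin r) (Fin n) R)
    (α : Fin n → Γ) (lam : Fin r → Γ) (β : Fin n → Γ),
    IsHomog 𝒜 P α lam → IsHomog 𝒜 Q lam β → A = P * Q → n ≤ r

/-- gr-prime matrix ideal: a set of square homogeneous matrices satisfying (PM1)–(PM6). -/
structure IsGrPrimeMatrixIdeal (𝒜 : Γ → AddSubgroup R) (P : Set (SqMat R)) : Prop where
  subset_homog : ∀ p ∈ P, IsHomogSq 𝒜 p.2
  pm1 : ∀ {n : ℕ} (A : Matrix (Fin n) (Fin n) R),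
    IsHomogSq 𝒜 A → ¬ IsGrFull 𝒜 A → (⟨n, A⟩ : SqMat R) ∈ P
  pm2 : ∀ {n : ℕ} (A B C : Matrix (Fin n) (Fin n) R),
    (⟨n, A⟩ : SqMat R) ∈ P → (⟨n, B⟩ : SqMat R) ∈ P → GrDetSum 𝒜 A B C →
    (⟨n, C⟩ : SqMat R) ∈ P
  pm3 : ∀ {m n : ℕ} (A : Matrix (Fin m) (Fin m) R) (B : Matrix (Fin n) (Fin n) R),
    (⟨m, A⟩ : SqMat R) ∈ P → IsHomogSq 𝒜 B → (⟨m + n, diagSum A B⟩ : SqMat R) ∈ P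
  pm4 : ∀ {m n : ℕ} (A : Matrix (Fin m) (Fin m) R) (B : Matrix (Fin n) (Fin n) R),
    IsHomogSq 𝒜 A → IsHomogSq 𝒜 B → (⟨m + n, diagSum A B⟩ : SqMat R) ∈ P →
    (⟨m, A⟩ : SqMat R) ∈ P ∨ (⟨n, B⟩ : SqMat R) ∈ P
  pm5 : (⟨1, (1 : Matrix (Fin 1) (Fin 1) R)⟩ : SqMat R) ∉ P
  pm6 : ∀ {n : ℕ} (A : Matrix (Fin n) (Fin n) R) (e f : Equiv.Perm (Fin n)),
    (⟨n, A⟩ : SqMat R) ∈ P → (⟨n, A.submatrix ⇑e ⇑f⟩ : SqMat R) ∈ P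

/-- gr-matrix ideal: a set of square homogeneous matrices satisfying (I1)–(I5). -/
structure IsGrMatrixIdeal (𝒜 : Γ → AddSubgroup R) (I : Set (SqMat R)) : Prop where
  subset_homog : ∀ p ∈ I, IsHomogSq 𝒜 p.2
  i1 : ∀ {n : ℕ} (A : Matrix (Fin n) (Fin n) R),
    IsHomogSq 𝒜 A → ¬ IsGrFull 𝒜 A → (⟨n, A⟩ : SqMat R) ∈ I
  i2 : ∀ {n : ℕ} (A B C : Matrix (Fin n) (Fin n) R),
    (⟨n, A⟩ : SqMat R) ∈ I → (⟨n, B⟩ : SqMat R) ∈ I → GrDetSum 𝒜 A B C →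
    (⟨n, C⟩ : SqMat R) ∈ I
  i3 : ∀ {m n : ℕ} (A : Matrix (Fin m) (Fin m) R) (B : Matrix (Fin n) (Fin n) R),
    (⟨m, A⟩ : SqMat R) ∈ I → IsHomogSq 𝒜 B → (⟨m + n, diagSum A B⟩ : SqMat R) ∈ I
  i4 : ∀ {n : ℕ} (A : Matrix (Fin n) (Fin n) R) (e f : Equiv.Perm (Fin n)),
    (⟨n, A⟩ : SqMat R) ∈ I → (⟨n, A.submatrix ⇑e ⇑f⟩ : SqMat R) ∈ I
  i5 : ∀ {n : ℕ} (A : Matrix (Fin n) (Fin n) R),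
    (⟨n + 1, diagSum A (1 : Matrix (Fin 1) (Fin 1) R)⟩ : SqMat R) ∈ I →
    (⟨n, A⟩ : SqMat R) ∈ I

/-- The diagonal sum of `r` copies of `A`. -/
def diagIter {n : ℕ} (A : Matrix (Fin n) (Fin n) R) :
    (r : ℕ) → Matrix (Fin (n * r)) (Fin (n * r)) R
  | 0 => 0
  | r + 1 => diagSum (diagIter A r) A

/-- Iterated determinantal sums (with arbitrary bracketing) of elements of `W`. -/
inductive IsDetSumOf (𝒜 : Γ → AddSubgroup R) (W : Set (SqMat R)) : SqMat R → Prop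
  | base (p : SqMat R) (hp : p ∈ W) : IsDetSumOf 𝒜 W p
  | step {n : ℕ} (A B C : Matrix (Fin n) (Fin n) R)
      (hA : IsDetSumOf 𝒜 W ⟨n, A⟩) (hB : IsDetSumOf 𝒜 W ⟨n, B⟩)
      (h : GrDetSum 𝒜 A B C) : IsDetSumOf 𝒜 W ⟨n, C⟩

/-- The homogeneous rational closure of degree `γ`: entries `(j,i)` of inverses of matrices
`A^f` with `A ∈ Sig` homogeneous of distribution `(α, β)` and `β j * (α i)⁻¹ = γ`. -/
def RatCl (𝒜 : Γ → AddSubgroup R) {S : Type w} [Ring S] (Sig : Set (SqMat R)) (f : R →+* S)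
    (γ : Γ) : Set S :=
  {x | ∃ (n : ℕ) (A : Matrix (Fin n) (Fin n) R) (α β : Fin n → Γ) (i j : Fin n)
        (B : Matrix (Fin n) (Fin n) S),
      (⟨n, A⟩ : SqMat R) ∈ Sig ∧ IsHomog 𝒜 A α β ∧ β j * (α i)⁻¹ = γ ∧
      (A.map ⇑f) * B = 1 ∧ B * (A.map ⇑f) = 1 ∧ B j i = x}

/-- gr-lower semimultiplicative set of square homogeneous matrices. -/
def IsGrLowerSemimult (𝒜 : Γ → AddSubgroup R) (Sig : Set (SqMat R)) : Prop :=
  ((⟨1, (1 : Matrix (Fin 1) (Fin 1) R)⟩ : SqMat R) ∈ Sig) ∧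
  ∀ {n m : ℕ} (A : Matrix (Fin n) (Fin n) R) (B : Matrix (Fin m) (Fin m) R)
    (α β : Fin n → Γ) (α' β' : Fin m → Γ) (C : Matrix (Fin m) (Fin n) R),
    (⟨n, A⟩ : SqMat R) ∈ Sig → (⟨m, B⟩ : SqMat R) ∈ Sig →
    IsHomog 𝒜 A α β → IsHomog 𝒜 B α' β' → IsHomog 𝒜 C α' β →
    (⟨n + m, lowerBlockSum A B C⟩ : SqMat R) ∈ Sig

end GradedDefs

/-- A homomorphism of `Γ`-graded rings from `(R, 𝒜)` to a `Γ`-graded division ring. -/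
structure GrDivRingHom (Γ : Type u) [Group Γ] [DecidableEq Γ] (R : Type v) [Ring R]
    (𝒜 : Γ → AddSubgroup R) where
  K : Type (max u v)
  [ringK : Ring K]
  [nontrivialK : Nontrivial K]
  grading : Γ → AddSubgroup K
  internal : DirectSum.IsInternal grading
  one_mem : (1 : K) ∈ grading 1
  mul_mem : ∀ {γ δ : Γ} {x y : K}, x ∈ grading γ → y ∈ grading δ → x * y ∈ grading (γ * δ)
  isUnit_of_ne : ∀ {γ : Γ} {x : K}, x ∈ grading γ → x ≠ 0 → IsUnit x
  φ : R →+* K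
  map_mem : ∀ {γ : Γ} {r : R}, r ∈ 𝒜 γ → φ r ∈ grading γ

attribute [instance] GrDivRingHom.ringK GrDivRingHom.nontrivialK


/-- The data of a gr-prime matrix ideal of a graded ring, bundled. -/
structure GCtx (Γ : Type u) [Group Γ] (R : Type v) [Ring R] where
  𝒜 : Γ → AddSubgroup R
  one_mem : (1 : R) ∈ 𝒜 1
  mul_mem : ∀ {γ δ : Γ} {x y : R}, x ∈ 𝒜 γ → y ∈ 𝒜 δ → x * y ∈ 𝒜 (γ * δ)
  P : Set (SqMat R)
  hP : IsGrPrimeMatrixIdeal 𝒜 P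

set_option linter.unusedSectionVars false
set_option linter.unusedSimpArgs false

namespace GCtx

variable {Γ : Type u} [Group Γ] {R : Type v} [Ring R] (c : GCtx Γ R)

/-- Homogeneity for matrices with arbitrary index types. -/
def Hm {ι κ : Type*} (A : Matrix ι κ R) (α : ι → Γ) (β : κ → Γ) : Prop :=
  ∀ i j, A i j ∈ c.𝒜 (α i * (β j)⁻¹)

/-- Singular (member of `P`) for arbitrary index types. -/
def Sing {ι κ : Type*} (A : Matrix ι κ R) : Prop :=
  ∃ (n : ℕ) (e : Fin n ≃ ι) (f : Fin n ≃ κ), (⟨n, A.submatrix e f⟩ : SqMat R) ∈ c.P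

section basic
variable {c}
variable {ι κ l ρ ι' κ' l' : Type*} [Fintype ι] [Fintype κ] [Fintype l] [Fintype ρ]
  [Fintype ι'] [Fintype κ'] [Fintype l']
  [DecidableEq ι] [DecidableEq κ] [DecidableEq l] [DecidableEq ρ]
  [DecidableEq ι'] [DecidableEq κ'] [DecidableEq l']

lemma mem_of {γ δ : Γ} {x : R} (h : x ∈ c.𝒜 γ) (e : γ = δ) : x ∈ c.𝒜 δ := e ▸ h

lemma Hm.mul {A : Matrix ι κ R} {B : Matrix κ l R} {α : ι → Γ} {β : κ → Γ} {δ : l → Γ}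
    (hA : c.Hm A α β) (hB : c.Hm B β δ) : c.Hm (A * B) α δ := by
  intro i j
  rw [Matrix.mul_apply]
  refine AddSubgroup.sum_mem _ fun k _ => ?_
  exact mem_of (c.mul_mem (hA i k) (hB k j)) (by group)

lemma Hm.add {A B : Matrix ι κ R} {α : ι → Γ} {β : κ → Γ}
    (hA : c.Hm A α β) (hB : c.Hm B α β) : c.Hm (A + B) α β :=
  fun i j => add_mem (hA i j) (hB i j)

lemma Hm.neg {A : Matrix ι κ R} {α : ι → Γ} {β : κ → Γ}
    (hA : c.Hm A α β) : c.Hm (-A) α β :=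
  fun i j => neg_mem (hA i j)

lemma Hm.zero {α : ι → Γ} {β : κ → Γ} : c.Hm (0 : Matrix ι κ R) α β :=
  fun _ _ => zero_mem _

lemma Hm.one {α : ι → Γ} : c.Hm (1 : Matrix ι ι R) α α := by
  intro i j
  rw [Matrix.one_apply]
  split_ifs with h
  · subst h; simpa using c.one_mem
  · exact zero_mem _

lemma Hm.blocks {A : Matrix ι κ R} {B : Matrix ι κ' R} {C : Matrix ι' κ R} {D : Matrix ι' κ' R}
    {α : ι → Γ} {β : κ → Γ} {α' : ι' → Γ} {β' : κ' → Γ}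
    (hA : c.Hm A α β) (hB : c.Hm B α β') (hC : c.Hm C α' β) (hD : c.Hm D α' β') :
    c.Hm (fromBlocks A B C D) (Sum.elim α α') (Sum.elim β β') := by
  rintro (i | i) (j | j)
  · exact hA i j
  · exact hB i j
  · exact hC i j
  · exact hD i j

lemma Hm.cols {A : Matrix ι κ R} {B : Matrix ι κ' R}
    {α : ι → Γ} {β : κ → Γ} {β' : κ' → Γ}
    (hA : c.Hm A α β) (hB : c.Hm B α β') :
    c.Hm (fromCols A B) α (Sum.elim β β') := by
  rintro i (j | j)
  · exact hA i j
  · exact hB i j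

lemma sing_iff_of (n : ℕ) (e : Fin n ≃ ι) (f : Fin n ≃ κ) (A : Matrix ι κ R) :
    c.Sing A ↔ (⟨n, A.submatrix e f⟩ : SqMat R) ∈ c.P := by
  constructor
  · rintro ⟨m, e', f', h⟩
    have hmn : m = n := by
      simpa using Fintype.card_congr (e'.trans e.symm)
    subst hmn
    have := c.hP.pm6 _ (e.trans e'.symm) (f.trans f'.symm) h
    simpa [Matrix.submatrix_submatrix, Function.comp_def] using this
  · intro h
    exact ⟨n, e, f, h⟩

lemma sing_fin {n : ℕ} (A : Matrix (Fin n) (Fin n) R) :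
    c.Sing A ↔ (⟨n, A⟩ : SqMat R) ∈ c.P := by
  rw [sing_iff_of n (Equiv.refl _) (Equiv.refl _)]; rfl

lemma Sing.submatrix {A : Matrix ι κ R} (h : c.Sing A) (e : ι' ≃ ι) (f : κ' ≃ κ) :
    c.Sing (A.submatrix e f) := by
  obtain ⟨n, e', f', h⟩ := h
  refine ⟨n, e'.trans e.symm, f'.trans f.symm, ?_⟩
  simpa [Matrix.submatrix_submatrix, Function.comp_def] using h

lemma sing_submatrix {A : Matrix ι κ R} (e : ι' ≃ ι) (f : κ' ≃ κ) :
    c.Sing (A.submatrix e f) ↔ c.Sing A := by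
  refine ⟨fun h => ?_, fun h => h.submatrix e f⟩
  have := h.submatrix e.symm f.symm
  rw [Matrix.submatrix_submatrix] at this
  simpa using this

lemma exists_equivs (h : Fintype.card ι = Fintype.card κ) :
    ∃ (n : ℕ) (_ : Fin n ≃ ι) (_ : Fin n ≃ κ), n = Fintype.card ι :=
  ⟨Fintype.card ι, (Fintype.equivFin ι).symm, (Fintype.equivFinOfCardEq h.symm).symm, rfl⟩

lemma sing_of_factor (h : Fintype.card ι = Fintype.card κ)
    (hl : Fintype.card l < Fintype.card ι) {X : Matrix ι l R} {Y : Matrix l κ R}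
    {α : ι → Γ} {δ : l → Γ} {β : κ → Γ} (hX : c.Hm X α δ) (hY : c.Hm Y δ β) :
    c.Sing (X * Y) := by
  obtain ⟨n, e, f, hn⟩ := exists_equivs h
  rw [sing_iff_of n e f]
  have hXY := hX.mul hY
  refine c.hP.pm1 _ ⟨α ∘ e, β ∘ f, fun i j => hXY (e i) (f j)⟩ ?_
  intro hfull
  let g := (Fintype.equivFin l).symm
  have := hfull (Fintype.card l) (X.submatrix e g) (Y.submatrix g f) (α ∘ e) (δ ∘ g) (β ∘ f)
    (fun i j => hX _ _) (fun i j => hY _ _) (by rw [Matrix.submatrix_mul_equiv])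
  omega

lemma sing_detsum {A B C : Matrix ι κ R} {α : ι → Γ} {β : κ → Γ}
    (hA : c.Hm A α β) (hB : c.Hm B α β) (j : κ)
    (hAB : ∀ i k, k ≠ j → A i k = B i k)
    (hC : ∀ i k, C i k = if k = j then A i k + B i k else A i k)
    (sA : c.Sing A) (sB : c.Sing B) : c.Sing C := by
  obtain ⟨n, e, f, h⟩ := sA
  rw [sing_iff_of n e f] at sB ⊢
  refine c.hP.pm2 _ _ _ h sB ⟨⟨α ∘ e, β ∘ f, fun i j => hA _ _, fun i j => hB _ _⟩, Or.inl
    ⟨f.symm j, fun i k hk => ?_, fun i k => ?_⟩⟩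
  · exact hAB _ _ (by rintro rfl; simp at hk)
  · simp [hC, Equiv.eq_symm_apply]

lemma sing_detsum_row {A B C : Matrix ι κ R} {α : ι → Γ} {β : κ → Γ}
    (hA : c.Hm A α β) (hB : c.Hm B α β) (j : ι)
    (hAB : ∀ i k, i ≠ j → A i k = B i k)
    (hC : ∀ i k, C i k = if i = j then A i k + B i k else A i k)
    (sA : c.Sing A) (sB : c.Sing B) : c.Sing C := by
  obtain ⟨n, e, f, h⟩ := sA
  rw [sing_iff_of n e f] at sB ⊢
  refine c.hP.pm2 _ _ _ h sB ⟨⟨α ∘ e, β ∘ f, fun i j => hA _ _, fun i j => hB _ _⟩, Or.inr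
    ⟨e.symm j, fun i k hk => ?_, fun i k => ?_⟩⟩
  · exact hAB _ _ (by rintro rfl; simp at hk)
  · simp [hC, Equiv.eq_symm_apply]

/-- One column step. -/
lemma sing_step {M : Matrix ρ κ R} {W : Matrix ρ l R} {X : Matrix l κ R} {Y : Matrix l l' R}
    {α : ρ → Γ} {β : κ → Γ} {δ : l → Γ} {β' : l' → Γ}
    (hM : c.Hm M α β) (hW : c.Hm W α δ) (hX : c.Hm X δ β) (hY : c.Hm Y δ β')
    (hl : Fintype.card l = Fintype.card l') (j : κ)
    (h : c.Sing (fromCols M (W * Y))) :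
    c.Sing (fromCols (M + Matrix.of fun i k => if k = j then (W * X) i k else 0) (W * Y)) := by
  have hcard : Fintype.card ρ = Fintype.card (κ ⊕ l') := by
    obtain ⟨n, e, f, -⟩ := h
    exact (Fintype.card_congr (e.symm.trans f))
  have hWX := hW.mul hX
  let D : Matrix ρ κ R := Matrix.of fun i k => if k = j then (W * X) i k else M i k
  have hD : c.Hm D α β := by
    intro i k
    simp only [D, Matrix.of_apply]
    split_ifs
    · exact hWX i k
    · exact hM i k
  have sD : c.Sing (fromCols D (W * Y)) := by
    let X1 : Matrix ρ ({k : κ // k ≠ j} ⊕ l) R := fromCols (Matrix.of fun i k => M i k.1) W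
    let Y1 : Matrix ({k : κ // k ≠ j} ⊕ l) (κ ⊕ l') R :=
      fromBlocks (Matrix.of fun a k => if a.1 = k then 1 else 0) 0
        (Matrix.of fun i k => if k = j then X i k else 0) Y
    have e : fromCols D (W * Y) = X1 * Y1 := by
      ext i (k | k)
      · simp only [D, X1, Y1, Matrix.mul_apply, Fintype.sum_sum_type, fromCols_apply_inl,
          fromCols_apply_inr, fromBlocks_apply₁₁, fromBlocks_apply₂₁, Matrix.of_apply]
        by_cases hk : k = j
        · subst hk
          have : ∀ a : {k' : κ // k' ≠ k}, a.1 ≠ k := fun a => a.2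
          simp [this]
        · simp only [hk, if_false, mul_zero, Finset.sum_const_zero, add_zero, mul_ite, mul_one]
          rw [Finset.sum_eq_single (⟨k, hk⟩ : {k : κ // k ≠ j})]
          · simp
          · intro b _ hb
            rw [if_neg]
            intro h'
            exact hb (Subtype.ext h')
          · simp
      · simp [X1, Y1, Matrix.mul_apply, Fintype.sum_sum_type]
    rw [e]
    refine sing_of_factor (δ := Sum.elim (fun k => β k.1) δ) (α := α) (β := Sum.elim β β') hcard ?_ ?_ ?_
    · rw [hcard]
      simp only [Fintype.card_sum, hl]
      have : Fintype.card {k : κ // k ≠ j} < Fintype.card κ :=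
        Fintype.card_subtype_lt (x := j) (by simp)
      omega
    · exact Hm.cols (fun i k => hM _ _) hW
    · refine Hm.blocks ?_ Hm.zero ?_ hY
      · intro a k
        simp only [Matrix.of_apply]
        split_ifs with h'
        · rw [h']; simpa using c.one_mem
        · exact zero_mem _
      · intro a k
        simp only [Matrix.of_apply]
        split_ifs with h'
        · exact hX _ _
        · exact zero_mem _
  refine sing_detsum (j := Sum.inl j) (hM.cols (hW.mul hY)) (hD.cols (hW.mul hY)) ?_ ?_ h sD
  · rintro i (k | k) hk
    · have : k ≠ j := fun h => hk (by rw [h])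
      simp [D, this]
    · rfl
  · rintro i (k | k)
    · by_cases hk : k = j
      · simp [hk, D]
      · simp [hk]
    · simp

lemma sing_colop_aux {M : Matrix ρ κ R} {W : Matrix ρ l R} {X : Matrix l κ R} {Y : Matrix l l' R}
    {α : ρ → Γ} {β : κ → Γ} {δ : l → Γ} {β' : l' → Γ}
    (hM : c.Hm M α β) (hW : c.Hm W α δ) (hX : c.Hm X δ β) (hY : c.Hm Y δ β')
    (hl : Fintype.card l = Fintype.card l')
    (h : c.Sing (fromCols M (W * Y))) : c.Sing (fromCols (M + W * X) (W * Y)) := by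
  have key : ∀ s : Finset κ, c.Sing (fromCols
      (M + Matrix.of fun i k => if k ∈ s then (W * X) i k else 0) (W * Y)) := by
    intro s
    induction s using Finset.induction_on with
    | empty =>
      convert h using 2
      ext i k; simp
    | insert j s hj ih =>
      have hM' : c.Hm (M + Matrix.of fun i k => if k ∈ s then (W * X) i k else 0) α β := by
        refine hM.add fun i k => ?_
        simp only [Matrix.of_apply]
        split_ifs
        · exact hW.mul hX i k
        · exact zero_mem _
      convert sing_step hM' hW hX hY hl j ih using 2
      ext i k
      by_cases hk : k = j
      · subst hk; simp [hj]
      · simp [hk]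
  convert key Finset.univ using 2
  ext i k; simp

lemma sing_colop {M : Matrix ρ κ R} {W : Matrix ρ l R} {X : Matrix l κ R} {Y : Matrix l l' R}
    {α : ρ → Γ} {β : κ → Γ} {δ : l → Γ} {β' : l' → Γ}
    (hM : c.Hm M α β) (hW : c.Hm W α δ) (hX : c.Hm X δ β) (hY : c.Hm Y δ β')
    (hl : Fintype.card l = Fintype.card l') :
    c.Sing (fromCols (M + W * X) (W * Y)) ↔ c.Sing (fromCols M (W * Y)) := by
  refine ⟨fun h => ?_, sing_colop_aux hM hW hX hY hl⟩
  have := sing_colop_aux (hM.add (hW.mul hX)) hW hX.neg hY hl h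
  simpa using this

/-- diagonal sums -/
lemma sing_diag {A : Matrix ι κ R} {B : Matrix ι' κ' R}
    {α : ι → Γ} {β : κ → Γ} {α' : ι' → Γ} {β' : κ' → Γ} (hA : c.Hm A α β) (hB : c.Hm B α' β')
    (h : Fintype.card ι = Fintype.card κ) (h' : Fintype.card ι' = Fintype.card κ') :
    c.Sing (fromBlocks A 0 0 B) ↔ c.Sing A ∨ c.Sing B := by
  obtain ⟨n, e, f, -⟩ := exists_equivs h
  obtain ⟨n', e', f', -⟩ := exists_equivs h'
  have e1 : (fromBlocks A 0 0 B).submatrix (finSumFinEquiv.symm.trans (e.sumCongr e'))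
      (finSumFinEquiv.symm.trans (f.sumCongr f')) =
      diagSum (A.submatrix e f) (B.submatrix e' f') := by
    unfold diagSum
    rw [Matrix.reindex_apply]
    ext i j
    simp only [Matrix.submatrix_apply, Equiv.trans_apply]
    generalize finSumFinEquiv.symm i = i
    generalize finSumFinEquiv.symm j = j
    rcases i with i | i <;> rcases j with j | j <;> simp
  have e2 : (fromBlocks B 0 0 A).submatrix (finSumFinEquiv.symm.trans (e'.sumCongr e))
      (finSumFinEquiv.symm.trans (f'.sumCongr f)) =
      diagSum (B.submatrix e' f') (A.submatrix e f) := by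
    unfold diagSum
    rw [Matrix.reindex_apply]
    ext i j
    simp only [Matrix.submatrix_apply, Equiv.trans_apply]
    generalize finSumFinEquiv.symm i = i
    generalize finSumFinEquiv.symm j = j
    rcases i with i | i <;> rcases j with j | j <;> simp
  have hA' : IsHomogSq c.𝒜 (A.submatrix e f) := ⟨α ∘ e, β ∘ f, fun i j => hA _ _⟩
  have hB' : IsHomogSq c.𝒜 (B.submatrix e' f') := ⟨α' ∘ e', β' ∘ f', fun i j => hB _ _⟩
  have e3 : c.Sing (fromBlocks A 0 0 B) ↔ c.Sing (fromBlocks B 0 0 A) := by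
    rw [← sing_submatrix (c := c) (A := fromBlocks A 0 0 B) (Equiv.sumComm _ _) (Equiv.sumComm _ _)]
    simp [Matrix.fromBlocks_submatrix_sum_swap_sum_swap]
  constructor
  · intro hs
    rw [sing_iff_of _ (finSumFinEquiv.symm.trans (e.sumCongr e'))
      (finSumFinEquiv.symm.trans (f.sumCongr f')), e1] at hs
    rw [sing_iff_of n e f, sing_iff_of n' e' f']
    exact c.hP.pm4 _ _ hA' hB' hs
  · rintro (hs | hs)
    · rw [sing_iff_of n e f] at hs
      rw [sing_iff_of _ (finSumFinEquiv.symm.trans (e.sumCongr e'))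
        (finSumFinEquiv.symm.trans (f.sumCongr f')), e1]
      exact c.hP.pm3 _ _ hs hB'
    · rw [sing_iff_of n' e' f'] at hs
      rw [e3, sing_iff_of _ (finSumFinEquiv.symm.trans (e'.sumCongr e))
        (finSumFinEquiv.symm.trans (f'.sumCongr f)), e2]
      exact c.hP.pm3 _ _ hs hA'

lemma sing_lower {A : Matrix ι κ R} {B : Matrix ι' κ' R} {C : Matrix ι' κ R}
    {α : ι → Γ} {β : κ → Γ} {α' : ι' → Γ} {β' : κ' → Γ} (hA : c.Hm A α β) (hB : c.Hm B α' β')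
    (hC : c.Hm C α' β)
    (h : Fintype.card ι = Fintype.card κ) (h' : Fintype.card ι' = Fintype.card κ') :
    c.Sing (fromBlocks A 0 C B) ↔ c.Sing A ∨ c.Sing B := by
  rw [← sing_diag hA hB h h']
  have := sing_colop (c := c) (M := fromRows A (0 : Matrix ι' κ R))
    (W := fromRows (0 : Matrix ι ι' R) (1 : Matrix ι' ι' R)) (X := C) (Y := B)
    (α := Sum.elim α α') (β := β) (δ := α') (β' := β') ?_ ?_ hC hB h'
  · have e1 : fromCols (fromRows A (0 : Matrix ι' κ R) + fromRows (0 : Matrix ι ι' R) 1 * C)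
        (fromRows (0 : Matrix ι ι' R) 1 * B) = fromBlocks A 0 C B := by
      ext (i | i) (j | j) <;> simp [fromRows_mul]
    have e2 : fromCols (fromRows A (0 : Matrix ι' κ R))
        (fromRows (0 : Matrix ι ι' R) 1 * B) = fromBlocks A 0 0 B := by
      ext (i | i) (j | j) <;> simp [fromRows_mul]
    rwa [e1, e2] at this
  · rintro (i | i) j
    · exact hA i j
    · exact zero_mem _
  · rintro (i | i) j
    · exact zero_mem _
    · exact Hm.one i j

lemma sing_upper {A : Matrix ι κ R} {B : Matrix ι' κ' R} {C : Matrix ι κ' R}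
    {α : ι → Γ} {β : κ → Γ} {α' : ι' → Γ} {β' : κ' → Γ} (hA : c.Hm A α β) (hB : c.Hm B α' β')
    (hC : c.Hm C α β')
    (h : Fintype.card ι = Fintype.card κ) (h' : Fintype.card ι' = Fintype.card κ') :
    c.Sing (fromBlocks A C 0 B) ↔ c.Sing A ∨ c.Sing B := by
  rw [← sing_submatrix (c := c) (Equiv.sumComm _ _) (Equiv.sumComm _ _)]
  have e : (fromBlocks A C 0 B).submatrix (Equiv.sumComm _ _) (Equiv.sumComm _ _) =
      fromBlocks B 0 C A := by
    ext (i | i) (j | j) <;> simp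
  rw [e]
  rw [sing_lower hB hA hC h' h, or_comm]

lemma not_sing_one : ¬ c.Sing (1 : Matrix ι ι R) := by
  have key : ∀ n : ℕ, (⟨n, (1 : Matrix (Fin n) (Fin n) R)⟩ : SqMat R) ∉ c.P := by
    intro n
    have h1 : ∀ n : ℕ, diagSum (1 : Matrix (Fin n) (Fin n) R) (1 : Matrix (Fin 1) (Fin 1) R) = 1 := by
      intro n
      unfold diagSum
      rw [fromBlocks_one]; simp
    have hh : ∀ n : ℕ, IsHomogSq c.𝒜 (1 : Matrix (Fin n) (Fin n) R) :=
      fun n => ⟨fun _ => 1, fun _ => 1, Hm.one (c := c)⟩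
    induction n with
    | zero =>
      intro h
      have := c.hP.pm3 _ (1 : Matrix (Fin 1) (Fin 1) R) h (hh 1)
      rw [h1] at this
      exact c.hP.pm5 this
    | succ n ih =>
      intro h
      rw [← h1] at h
      exact (c.hP.pm4 _ _ (hh _) (hh _) h).elim ih c.hP.pm5
  rw [sing_iff_of _ (Fintype.equivFin ι).symm (Fintype.equivFin ι).symm]
  simpa using key _

lemma sing_neg_mul {A : Matrix ι κ R} {B : Matrix κ l R}
    {α : ι → Γ} {β : κ → Γ} {δ : l → Γ} (hA : c.Hm A α β) (hB : c.Hm B β δ)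
    (h : Fintype.card ι = Fintype.card κ) (h' : Fintype.card κ = Fintype.card l) :
    c.Sing (-(A * B)) ↔ c.Sing A ∨ c.Sing B := by
  rw [← sing_lower (C := (1 : Matrix κ κ R)) hA hB Hm.one h h']
  have := sing_colop (c := c) (M := fromRows (0 : Matrix ι l R) B)
    (W := fromRows A (1 : Matrix κ κ R)) (X := -B) (Y := (1 : Matrix κ κ R))
    (α := Sum.elim α β) (β := δ) (δ := β) (β' := β) ?_ ?_ hB.neg Hm.one rfl
  · have e1 : fromCols (fromRows (0 : Matrix ι l R) B + fromRows A (1 : Matrix κ κ R) * (-B))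
        (fromRows A (1 : Matrix κ κ R) * (1 : Matrix κ κ R)) = fromBlocks (-(A * B)) A 0 1 := by
      ext (i | i) (j | j) <;> simp [fromRows_mul]
    have e2 : fromCols (fromRows (0 : Matrix ι l R) B)
        (fromRows A (1 : Matrix κ κ R) * (1 : Matrix κ κ R)) =
        (fromBlocks A 0 1 B).submatrix (Equiv.refl _) (Equiv.sumComm _ _) := by
      ext (i | i) (j | j) <;> simp
    rw [e1, e2, sing_submatrix, sing_upper (hA.mul hB).neg Hm.one hA (h.trans h') rfl] at this
    rw [← this]
    simp [not_sing_one]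
  · rintro (i | i) j
    · exact zero_mem _
    · exact hB i j
  · rintro (i | i) j
    · exact hA i j
    · exact Hm.one i j

lemma sing_mul {A : Matrix ι κ R} {B : Matrix κ l R}
    {α : ι → Γ} {β : κ → Γ} {δ : l → Γ} (hA : c.Hm A α β) (hB : c.Hm B β δ)
    (h : Fintype.card ι = Fintype.card κ) (h' : Fintype.card κ = Fintype.card l) :
    c.Sing (A * B) ↔ c.Sing A ∨ c.Sing B := by
  have h1 := sing_neg_mul hA.neg hB h h'
  have h2 := sing_neg_mul hA (Hm.one (α := β)) h rfl
  rw [Matrix.neg_mul, neg_neg] at h1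
  rw [Matrix.mul_one] at h2
  simp only [not_sing_one, or_false] at h2
  rw [h1, h2]

end basic


section pre

lemma Hm.rows {c : GCtx Γ R} {ι ι' κ : Type*} {A : Matrix ι κ R} {B : Matrix ι' κ R}
    {α : ι → Γ} {α' : ι' → Γ} {β : κ → Γ}
    (hA : c.Hm A α β) (hB : c.Hm B α' β) :
    c.Hm (fromRows A B) (Sum.elim α α') β := by
  rintro (i | i) j
  · exact hA i j
  · exact hB i j

lemma Hm.congr {c : GCtx Γ R} {ι κ : Type*} {A : Matrix ι κ R}
    {α α' : ι → Γ} {β β' : κ → Γ}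
    (hA : c.Hm A α β) (h : ∀ i j, α i * (β j)⁻¹ = α' i * (β' j)⁻¹) :
    c.Hm A α' β' := fun i j => mem_of (hA i j) (h i j)

lemma Hm.shift {c : GCtx Γ R} {ι κ : Type*} {A : Matrix ι κ R}
    {α : ι → Γ} {β : κ → Γ} (hA : c.Hm A α β) (δ : Γ) :
    c.Hm A (fun i => α i * δ) (fun j => β j * δ) := hA.congr fun i j => by group

/-- A formal expression `f A⁻¹ x`, homogeneous of degree `γ`. -/
structure Pre (c : GCtx Γ R) (ι : Type) [Fintype ι] [DecidableEq ι] (γ : Γ) where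
  A : Matrix ι ι R
  f : Matrix Unit ι R
  x : Matrix ι Unit R
  α : ι → Γ
  β : ι → Γ
  hA : c.Hm A α β
  hf : c.Hm f (fun _ => γ) β
  hx : c.Hm x α (fun _ => 1)
  ns : ¬ c.Sing A

variable {c : GCtx Γ R}
variable {ι κ l ι' κ' : Type} [Fintype ι] [Fintype κ] [Fintype l]
  [DecidableEq ι] [DecidableEq κ] [DecidableEq l]
  [Fintype ι'] [Fintype κ'] [DecidableEq ι'] [DecidableEq κ']
variable {γ δ ε γ' : Γ}

/-- The bordered matrix. -/
def Pre.bd (p : c.Pre ι γ) : Matrix (ι ⊕ Unit) (ι ⊕ Unit) R := fromBlocks p.A p.x p.f 0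

lemma Pre.bd_hm (p : c.Pre ι γ) :
    c.Hm p.bd (Sum.elim p.α fun _ => γ) (Sum.elim p.β fun _ => 1) :=
  p.hA.blocks p.hx p.hf Hm.zero

/-- The expression vanishes. -/
def Pre.Van (p : c.Pre ι γ) : Prop := c.Sing p.bd

/-- Intertwining of formal expressions. -/
def Inter (p : c.Pre ι γ) (q : c.Pre κ γ') : Prop :=
  ∃ U V : Matrix κ ι R, c.Hm U q.α p.α ∧ c.Hm V q.β p.β ∧
    q.A * V = U * p.A ∧ U * p.x = q.x ∧ q.f * V = p.f

/-- Auxiliary permutation. -/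
def swapEquiv (a b d : Type) : a ⊕ (b ⊕ d) ≃ b ⊕ (a ⊕ d) :=
  ((Equiv.sumAssoc a b d).symm.trans ((Equiv.sumComm a b).sumCongr (Equiv.refl d))).trans
    (Equiv.sumAssoc b a d)

lemma van_iff_of_inter {p : c.Pre ι γ} {q : c.Pre κ γ} (h : Inter p q) : p.Van ↔ q.Van := by
  obtain ⟨U, V, hU, hV, h1, h2, h3⟩ := h
  let Z1 : Matrix (κ ⊕ (ι ⊕ Unit)) (κ ⊕ (ι ⊕ Unit)) R := fromBlocks q.A 0 (fromRows 0 q.f) p.bd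
  let Z2 : Matrix (κ ⊕ (ι ⊕ Unit)) (κ ⊕ (ι ⊕ Unit)) R :=
    fromBlocks q.A (fromCols 0 q.x) (fromRows 0 q.f) (fromBlocks p.A p.x 0 0)
  let L : Matrix (κ ⊕ (ι ⊕ Unit)) (κ ⊕ (ι ⊕ Unit)) R := fromBlocks 1 (fromCols U 0) 0 1
  let Q : Matrix (κ ⊕ (ι ⊕ Unit)) (κ ⊕ (ι ⊕ Unit)) R := fromBlocks 1 (fromCols (-V) 0) 0 1
  let a : κ ⊕ (ι ⊕ Unit) → Γ := Sum.elim q.α (Sum.elim p.α fun _ => γ)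
  let b : κ ⊕ (ι ⊕ Unit) → Γ := Sum.elim q.β (Sum.elim p.β fun _ => 1)
  have hL : c.Hm L a a := Hm.one.blocks (hU.cols Hm.zero) Hm.zero Hm.one
  have hQ : c.Hm Q b b := Hm.one.blocks (hV.neg.cols Hm.zero) Hm.zero Hm.one
  have hg : c.Hm (fromRows (0 : Matrix ι κ R) q.f) (Sum.elim p.α fun _ => γ) q.β :=
    Hm.zero.rows q.hf
  have hZ1 : c.Hm Z1 a b := q.hA.blocks Hm.zero hg p.bd_hm
  have sL : ¬ c.Sing L := by
    rw [sing_upper (α := q.α) (β := q.α) (α' := Sum.elim p.α fun _ => γ)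
      (β' := Sum.elim p.α fun _ => γ) Hm.one Hm.one (hU.cols Hm.zero) rfl rfl]
    simp [not_sing_one]
  have sQ : ¬ c.Sing Q := by
    rw [sing_upper (α := q.β) (β := q.β) (α' := Sum.elim p.β fun _ => 1)
      (β' := Sum.elim p.β fun _ => 1) Hm.one Hm.one (hV.neg.cols Hm.zero) rfl rfl]
    simp [not_sing_one]
  have e : L * Z1 * Q = Z2 := by
    simp only [L, Z1, Q, Z2, Pre.bd, fromBlocks_multiply, Matrix.one_mul, Matrix.zero_mul,
      Matrix.mul_one, Matrix.mul_zero, fromCols_mul_fromRows, fromCols_mul_fromBlocks,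
      Matrix.mul_fromCols, add_zero, zero_add, fromRows_mul, Matrix.mul_neg, h1, h2, h3]
    ext (i | i | i) (j | j | j) <;> simp [h3]
  have s1 : c.Sing Z1 ↔ p.Van := by
    rw [sing_lower q.hA p.bd_hm hg rfl rfl, Pre.Van]
    simp [q.ns]
  have s2 : c.Sing Z2 ↔ q.Van := by
    rw [← sing_submatrix (c := c) (A := Z2) (swapEquiv ι κ Unit) (swapEquiv ι κ Unit)]
    have e : Z2.submatrix (swapEquiv ι κ Unit) (swapEquiv ι κ Unit) =
        fromBlocks p.A (fromCols 0 p.x) 0 q.bd := by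
      ext (i | i | i) (j | j | j) <;> simp [swapEquiv, Z2, Pre.bd]
    rw [e, sing_upper p.hA q.bd_hm (Hm.zero.cols p.hx) rfl rfl, Pre.Van]
    simp [p.ns]
  rw [← s1, ← s2, ← e, sing_mul (hL.mul hZ1) hQ rfl rfl, sing_mul hL hZ1 rfl rfl]
  simp [sL, sQ]

/-- change the row -/
def Pre.withF (p : c.Pre ι γ) (f : Matrix Unit ι R) (hf : c.Hm f (fun _ => γ') p.β) :
    c.Pre ι γ' := { p with f := f, hf := hf }

/-- negation -/
def Pre.neg (p : c.Pre ι γ) : c.Pre ι γ := p.withF (-p.f) p.hf.neg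

/-- addition -/
def Pre.add (p : c.Pre ι γ) (q : c.Pre κ γ) : c.Pre (ι ⊕ κ) γ where
  A := fromBlocks p.A 0 0 q.A
  f := fromCols p.f q.f
  x := fromRows p.x q.x
  α := Sum.elim p.α q.α
  β := Sum.elim p.β q.β
  hA := p.hA.blocks Hm.zero Hm.zero q.hA
  hf := p.hf.cols q.hf
  hx := p.hx.rows q.hx
  ns := by
    rw [sing_diag p.hA q.hA rfl rfl]
    simp [p.ns, q.ns]

/-- subtraction -/
abbrev Pre.sub (p : c.Pre ι γ) (q : c.Pre κ γ) : c.Pre (ι ⊕ κ) γ := p.add q.neg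

lemma Pre.mul_hm (p : c.Pre ι γ) (q : c.Pre κ δ) :
    c.Hm (-(p.x * q.f)) (fun i => p.α i * δ) q.β :=
  Hm.neg (Hm.mul (β := fun _ : Unit => δ) ((p.hx.shift δ).congr (by simp)) q.hf)

/-- multiplication -/
def Pre.mul (p : c.Pre ι γ) (q : c.Pre κ δ) : c.Pre (ι ⊕ κ) (γ * δ) where
  A := fromBlocks p.A (-(p.x * q.f)) 0 q.A
  f := fromCols p.f 0
  x := fromRows 0 q.x
  α := Sum.elim (fun i => p.α i * δ) q.α
  β := Sum.elim (fun i => p.β i * δ) q.β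
  hA := (p.hA.shift δ).blocks (p.mul_hm q) Hm.zero q.hA
  hf := (p.hf.shift δ).cols Hm.zero
  hx := Hm.zero.rows q.hx
  ns := by
    rw [sing_upper (p.hA.shift δ) q.hA (p.mul_hm q) rfl rfl]
    simp [p.ns, q.ns]

/-- zero -/
def Pre.zero (c : GCtx Γ R) (γ : Γ) : c.Pre Empty γ where
  A := 1
  f := 0
  x := 0
  α := fun _ => 1
  β := fun _ => 1
  hA := Hm.one
  hf := Hm.zero
  hx := Hm.zero
  ns := not_sing_one

/-- image of a homogeneous element -/
def Pre.ofR (r : R) (hr : r ∈ c.𝒜 γ) : c.Pre Unit γ where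
  A := 1
  f := 1
  x := Matrix.of fun _ _ => r
  α := fun _ => γ
  β := fun _ => γ
  hA := Hm.one
  hf := Hm.one
  hx := fun _ _ => by simpa using hr
  ns := not_sing_one

/-- reindexing -/
def Pre.reindex (p : c.Pre ι γ) (e : κ ≃ ι) : c.Pre κ γ where
  A := p.A.submatrix e e
  f := p.f.submatrix id e
  x := p.x.submatrix e id
  α := p.α ∘ e
  β := p.β ∘ e
  hA := fun i j => p.hA _ _
  hf := fun i j => p.hf _ _
  hx := fun i j => p.hx _ _
  ns := by rw [sing_submatrix]; exact p.ns

/-- Equivalence of expressions. -/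
def Rel (p : c.Pre ι γ) (q : c.Pre κ γ) : Prop := (p.sub q).Van

lemma van_zero_row (p : c.Pre ι γ) (h : p.f = 0) : p.Van := by
  have e : p.bd = fromRows (fromCols p.A p.x) (0 : Matrix Unit _ R) := by
    ext (i | i) (j | j) <;> simp [Pre.bd, h]
  have e2 : p.bd = fromRows (1 : Matrix ι ι R) (0 : Matrix Unit ι R) * (fromCols p.A p.x) := by
    rw [e, fromRows_mul]; simp
  unfold Pre.Van
  rw [e2]
  refine sing_of_factor (α := Sum.elim p.α fun _ => γ) (δ := p.α) (β := Sum.elim p.β fun _ => 1) rfl (by simp) ?_ (p.hA.cols p.hx)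
  exact Hm.one.rows Hm.zero

lemma van_add_row (p : c.Pre ι γ) {f1 f2 : Matrix Unit ι R} (h1 : c.Hm f1 (fun _ => γ) p.β)
    (h2 : c.Hm f2 (fun _ => γ) p.β) (v1 : (p.withF f1 h1).Van) (v2 : (p.withF f2 h2).Van) :
    (p.withF (f1 + f2) (h1.add h2)).Van := by
  refine sing_detsum_row (Pre.bd_hm (p.withF f1 h1)) (Pre.bd_hm (p.withF f2 h2)) (Sum.inr ()) ?_ ?_ v1 v2
  · rintro (i | i) (j | j) h <;> simp_all [Pre.bd, Pre.withF]
  · rintro (i | i) (j | j) <;> simp [Pre.bd, Pre.withF]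

lemma van_neg {p : c.Pre ι γ} (h : p.Van) : p.neg.Van := by
  have e : p.neg.bd = fromBlocks 1 0 0 (-1) * p.bd := by
    simp [Pre.bd, Pre.neg, Pre.withF, fromBlocks_multiply]
  have hm : c.Hm (fromBlocks 1 0 0 (-1) : Matrix (ι ⊕ Unit) (ι ⊕ Unit) R)
    (Sum.elim p.α fun _ => γ) (Sum.elim p.α fun _ => γ) :=
    Hm.one.blocks Hm.zero Hm.zero Hm.one.neg
  unfold Pre.Van
  rw [e, sing_mul hm p.bd_hm rfl rfl]
  exact Or.inr h

lemma van_add {p : c.Pre ι γ} {q : c.Pre κ γ} (hp : p.Van) (hq : q.Van) : (p.add q).Van := by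
  have h1 : c.Hm (fromCols p.f (0 : Matrix Unit κ R)) (fun _ => γ) (p.add q).β := p.hf.cols Hm.zero
  have h2 : c.Hm (fromCols (0 : Matrix Unit ι R) q.f) (fun _ => γ) (p.add q).β := Hm.zero.cols q.hf
  have := van_add_row (p.add q) h1 h2 ?_ ?_
  · have e : (p.add q).f = fromCols p.f (0 : Matrix Unit κ R) + fromCols (0 : Matrix Unit ι R) q.f := by
      ext i (j | j) <;> simp [Pre.add]
    unfold Pre.withF at this
    simp only [← e] at this
    exact this
  · rw [van_iff_of_inter (q := p)]
    · exact hp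
    · refine ⟨fromCols 1 0, fromCols 1 0, Hm.one.cols Hm.zero, Hm.one.cols Hm.zero, ?_, ?_, ?_⟩ <;>
      simp [Pre.add, Pre.withF, fromCols_mul_fromBlocks, Matrix.mul_fromCols, fromCols_mul_fromRows]
  · rw [van_iff_of_inter (q := q)]
    · exact hq
    · refine ⟨fromCols 0 1, fromCols 0 1, Hm.zero.cols Hm.one, Hm.zero.cols Hm.one, ?_, ?_, ?_⟩ <;>
      simp [Pre.add, Pre.withF, fromCols_mul_fromBlocks, Matrix.mul_fromCols, fromCols_mul_fromRows]

lemma Rel.of_inter {p : c.Pre ι γ} {q : c.Pre κ γ} (h : Inter p q) : Rel p q := by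
  obtain ⟨U, V, hU, hV, h1, h2, h3⟩ := h
  have : Inter (p.withF 0 (Hm.zero : c.Hm 0 (fun _ => γ) _)) (p.sub q) := by
    refine ⟨fromRows 1 U, fromRows 1 V, Hm.one.rows hU, Hm.one.rows hV, ?_, ?_, ?_⟩ <;>
    simp [Pre.add, Pre.neg, Pre.withF, fromBlocks_mul_fromRows, fromRows_mul, fromCols_mul_fromRows,
      h1, h2, h3]
  rw [Rel, ← van_iff_of_inter this]
  exact van_zero_row _ rfl

lemma Rel.of_inter' {p : c.Pre ι γ} {q : c.Pre κ γ} (h : Inter p q) : p.Van ↔ q.Van :=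
  van_iff_of_inter h

lemma Inter.refl (p : c.Pre ι γ) : Inter p p :=
  ⟨1, 1, Hm.one, Hm.one, by simp, by simp, by simp⟩

lemma Rel.refl (p : c.Pre ι γ) : Rel p p := .of_inter (.refl p)

lemma Rel.symm {p : c.Pre ι γ} {q : c.Pre κ γ} (h : Rel p q) : Rel q p := by
  have : Inter (q.sub p) (p.sub q).neg := by
    refine ⟨fromBlocks 0 1 1 0, fromBlocks 0 1 1 0, Hm.zero.blocks Hm.one Hm.one Hm.zero,
      Hm.zero.blocks Hm.one Hm.one Hm.zero, ?_, ?_, ?_⟩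
    · simp [Pre.add, Pre.neg, Pre.withF, fromBlocks_multiply]
    · simp [Pre.add, Pre.neg, Pre.withF, fromBlocks_mul_fromRows]
    · ext i (j | j) <;> simp [Pre.add, Pre.neg, Pre.withF, fromCols_mul_fromBlocks]
  exact (van_iff_of_inter this).2 (van_neg h)

lemma Rel.trans {p : c.Pre ι γ} {q : c.Pre κ γ} {r : c.Pre l γ} (h : Rel p q) (h' : Rel q r) :
    Rel p r := by
  let t : c.Pre (ι ⊕ (κ ⊕ l)) γ := (p.add (q.add r)).withF (fromCols p.f (fromCols 0 (-r.f)))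
    (p.hf.cols (Hm.zero.cols r.hf.neg))
  have h1 : Inter t ((p.sub q).add (q.sub r)) := by
    refine ⟨fromBlocks (fromRows 1 0) (fromBlocks 0 0 1 0) 0 1,
      fromBlocks (fromRows 1 0) (fromBlocks 0 0 1 0) 0 1,
      (Hm.one.rows Hm.zero).blocks (Hm.zero.blocks Hm.zero Hm.one Hm.zero) Hm.zero Hm.one,
      (Hm.one.rows Hm.zero).blocks (Hm.zero.blocks Hm.zero Hm.one Hm.zero) Hm.zero Hm.one,
      ?_, ?_, ?_⟩
    · simp [t, Pre.add, Pre.neg, Pre.withF, fromBlocks_multiply, fromBlocks_mul_fromRows,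
        fromRows_mul]
    · simp [t, Pre.add, Pre.neg, Pre.withF, fromBlocks_mul_fromRows, fromRows_mul]
      ext (i | i) j <;> rcases i with i | i <;> simp
    · simp [t, Pre.add, Pre.neg, Pre.withF, fromCols_mul_fromBlocks, fromCols_mul_fromRows]
      ext i (j | j | j) <;> simp
  have h2 : Inter t (p.sub r) := by
    refine ⟨fromBlocks 1 0 0 (fromCols 0 1), fromBlocks 1 0 0 (fromCols 0 1),
      Hm.one.blocks Hm.zero Hm.zero (Hm.zero.cols Hm.one),
      Hm.one.blocks Hm.zero Hm.zero (Hm.zero.cols Hm.one), ?_, ?_, ?_⟩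
    · simp [t, Pre.add, Pre.neg, Pre.withF, fromBlocks_multiply, Matrix.mul_fromCols,
        fromCols_mul_fromBlocks]
    · simp [t, Pre.add, Pre.neg, Pre.withF, fromBlocks_mul_fromRows, fromCols_mul_fromRows]
    · simp [t, Pre.add, Pre.neg, Pre.withF, fromCols_mul_fromBlocks, Matrix.mul_fromCols]
  exact (van_iff_of_inter h2).1 ((van_iff_of_inter h1).2 (van_add h h'))

lemma Rel.add {p : c.Pre ι γ} {p' : c.Pre ι' γ} {q : c.Pre κ γ} {q' : c.Pre κ' γ}
    (h : Rel p p') (h' : Rel q q') : Rel (p.add q) (p'.add q') := by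
  have : Inter ((p.add q).sub (p'.add q')) ((p.sub p').add (q.sub q')) := by
    refine ⟨fromBlocks (fromBlocks 1 0 0 0) (fromBlocks 0 0 1 0) (fromBlocks 0 1 0 0)
      (fromBlocks 0 0 0 1), fromBlocks (fromBlocks 1 0 0 0) (fromBlocks 0 0 1 0) (fromBlocks 0 1 0 0)
      (fromBlocks 0 0 0 1),
      (Hm.one.blocks Hm.zero Hm.zero Hm.zero).blocks (Hm.zero.blocks Hm.zero Hm.one Hm.zero)
      (Hm.zero.blocks Hm.one Hm.zero Hm.zero) (Hm.zero.blocks Hm.zero Hm.zero Hm.one),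
      (Hm.one.blocks Hm.zero Hm.zero Hm.zero).blocks (Hm.zero.blocks Hm.zero Hm.one Hm.zero)
      (Hm.zero.blocks Hm.one Hm.zero Hm.zero) (Hm.zero.blocks Hm.zero Hm.zero Hm.one), ?_, ?_, ?_⟩
    · simp [Pre.add, Pre.neg, Pre.withF, fromBlocks_multiply]
    · simp [Pre.add, Pre.neg, Pre.withF, fromBlocks_mul_fromRows]
      ext (i | i) j <;> rcases i with i | i <;> simp
    · simp [Pre.add, Pre.neg, Pre.withF, fromCols_mul_fromBlocks]
      ext i (j | j) <;> rcases j with j | j <;> simp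
  exact (van_iff_of_inter this).2 (van_add h h')

lemma Rel.neg {p : c.Pre ι γ} {q : c.Pre κ γ} (h : Rel p q) : Rel p.neg q.neg := by
  have : Inter (p.neg.sub q.neg) (p.sub q).neg := by
    refine ⟨1, 1, Hm.one, Hm.one, by simp [Pre.add, Pre.neg, Pre.withF],
      by simp [Pre.add, Pre.neg, Pre.withF], ?_⟩
    ext i (j | j) <;> simp [Pre.add, Pre.neg, Pre.withF]
  exact (van_iff_of_inter this).2 (van_neg h)

lemma Rel.reindex (p : c.Pre ι γ) (e : κ ≃ ι) : Rel p (p.reindex e) := by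
  refine .of_inter ⟨(1 : Matrix ι ι R).submatrix e id, (1 : Matrix ι ι R).submatrix e id,
    fun i j => (Hm.one (c := c) (α := p.α)) (e i) j, fun i j => (Hm.one (c := c) (α := p.β)) (e i) j, ?_, ?_, ?_⟩
  · ext i j
    simp [Pre.reindex, Matrix.mul_apply, Matrix.one_apply]
    rw [Finset.sum_eq_single (e.symm j)] <;> simp +contextual [Equiv.eq_symm_apply]
  · ext i j
    simp [Pre.reindex, Matrix.mul_apply, Matrix.one_apply]
  · ext i j
    simp [Pre.reindex, Matrix.mul_apply, Matrix.one_apply]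
    rw [Finset.sum_eq_single (e.symm j)] <;> simp +contextual [Equiv.eq_symm_apply]

lemma van_zero : (Pre.zero c γ).Van := van_zero_row _ rfl

lemma Rel.zero_iff {p : c.Pre ι γ} : Rel p (Pre.zero c γ) ↔ p.Van := by
  have : Inter (p.sub (Pre.zero c γ)) p := by
    refine ⟨fromCols 1 0, fromCols 1 0, Hm.one.cols Hm.zero, Hm.one.cols Hm.zero, ?_, ?_, ?_⟩
    · simp [Pre.add, Pre.neg, Pre.withF, fromCols_mul_fromBlocks, Matrix.mul_fromCols]
    · simp [Pre.add, Pre.neg, Pre.withF, fromCols_mul_fromRows]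
    · ext i (j | j) <;> simp [Pre.add, Pre.neg, Pre.withF, Pre.zero]
  exact van_iff_of_inter this

lemma Rel.add_zero (p : c.Pre ι γ) : Rel (p.add (Pre.zero c γ)) p := by
  refine .of_inter ⟨fromCols 1 0, fromCols 1 0, Hm.one.cols Hm.zero, Hm.one.cols Hm.zero, ?_, ?_, ?_⟩
  · simp [Pre.add, fromCols_mul_fromBlocks, Matrix.mul_fromCols]
  · simp [Pre.add, fromCols_mul_fromRows]
  · ext i (j | j) <;> simp [Pre.add, Pre.zero]

lemma Rel.add_comm (p : c.Pre ι γ) (q : c.Pre κ γ) : Rel (p.add q) (q.add p) := by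
  refine .of_inter ⟨fromBlocks 0 1 1 0, fromBlocks 0 1 1 0, Hm.zero.blocks Hm.one Hm.one Hm.zero,
      Hm.zero.blocks Hm.one Hm.one Hm.zero, ?_, ?_, ?_⟩
  · simp [Pre.add, fromBlocks_multiply]
  · simp [Pre.add, fromBlocks_mul_fromRows]
  · simp [Pre.add, fromCols_mul_fromBlocks]

lemma Rel.add_assoc (p : c.Pre ι γ) (q : c.Pre κ γ) (r : c.Pre l γ) :
    Rel ((p.add q).add r) (p.add (q.add r)) := by
  refine .of_inter ⟨fromBlocks (fromCols 1 0) 0 (fromBlocks 0 1 0 0) (fromRows 0 1),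
    fromBlocks (fromCols 1 0) 0 (fromBlocks 0 1 0 0) (fromRows 0 1),
    (Hm.one.cols Hm.zero).blocks Hm.zero (Hm.zero.blocks Hm.one Hm.zero Hm.zero) (Hm.zero.rows Hm.one),
    (Hm.one.cols Hm.zero).blocks Hm.zero (Hm.zero.blocks Hm.one Hm.zero Hm.zero) (Hm.zero.rows Hm.one),
    ?_, ?_, ?_⟩
  · simp [Pre.add, fromBlocks_multiply, fromCols_mul_fromBlocks, fromRows_mul, fromBlocks_mul_fromRows, Matrix.mul_fromCols]
  · simp [Pre.add, fromBlocks_mul_fromRows, fromCols_mul_fromRows, fromRows_mul]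
    ext (i | i | i) j <;> simp
  · simp [Pre.add, fromCols_mul_fromBlocks, Matrix.mul_fromCols, fromCols_mul_fromRows]
    ext i ((j | j) | j) <;> simp

/-- additivity in the row -/
lemma Rel.row_add (p : c.Pre ι γ) {f1 f2 f3 : Matrix Unit ι R} (h1 : c.Hm f1 (fun _ => γ) p.β)
    (h2 : c.Hm f2 (fun _ => γ) p.β) (h3 : c.Hm f3 (fun _ => γ) p.β) (e : f3 = f1 + f2) :
    Rel (p.withF f3 h3) ((p.withF f1 h1).add (p.withF f2 h2)) := by
  refine .of_inter ⟨fromRows 1 1, fromRows 1 1, Hm.one.rows Hm.one, Hm.one.rows Hm.one, ?_, ?_, ?_⟩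
  · simp [Pre.add, Pre.withF, fromBlocks_mul_fromRows, fromRows_mul]
  · simp [Pre.add, Pre.withF, fromRows_mul]
  · simp [Pre.add, Pre.withF, fromCols_mul_fromRows, e]

lemma Rel.add_neg (p : c.Pre ι γ) : Rel (p.neg.add p) (Pre.zero c γ) := by
  have h1 := Rel.row_add p p.hf.neg p.hf Hm.zero (by simp)
  refine h1.symm.trans ?_
  rw [Rel.zero_iff]
  exact van_zero_row _ rfl

end pre


section mulsec

variable {c : GCtx Γ R}
variable {ι κ l ι' κ' : Type} [Fintype ι] [Fintype κ] [Fintype l]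
  [DecidableEq ι] [DecidableEq κ] [DecidableEq l]
  [Fintype ι'] [Fintype κ'] [DecidableEq ι'] [DecidableEq κ']
variable {γ δ ε γ' : Γ}

lemma van_neg_iff {p : c.Pre ι γ} : p.neg.Van ↔ p.Van := by
  refine ⟨fun h => ?_, van_neg⟩
  have := van_neg h
  have e : p.neg.neg.bd = p.bd := by simp [Pre.bd, Pre.neg, Pre.withF]
  rw [Pre.Van, e] at this
  exact this

lemma Rel.van {p : c.Pre ι γ} {q : c.Pre κ γ} (h : Rel p q) : p.Van ↔ q.Van := by
  rw [← Rel.zero_iff, ← Rel.zero_iff]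
  exact ⟨fun k => h.symm.trans k, fun k => h.trans k⟩

/-- Auxiliary permutation. -/
def rotEquiv (a b d : Type) : (a ⊕ d) ⊕ b ≃ (a ⊕ b) ⊕ d :=
  ((Equiv.sumAssoc a d b).trans ((Equiv.refl a).sumCongr (Equiv.sumComm d b))).trans
    (Equiv.sumAssoc a b d).symm

lemma van_mul (p : c.Pre ι γ) (q : c.Pre κ δ) : (p.mul q).Van ↔ p.Van ∨ q.Van := by
  let M1 : Matrix ((ι ⊕ κ) ⊕ Unit) ((ι ⊕ Unit) ⊕ κ) R :=
    fromBlocks (fromBlocks p.A p.x 0 0) (fromRows 0 1) (fromCols p.f 0) 0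
  let M2 : Matrix ((ι ⊕ Unit) ⊕ κ) ((ι ⊕ κ) ⊕ Unit) R :=
    fromBlocks (fromBlocks 1 0 0 (-q.f)) 0 (fromCols 0 q.A) q.x
  let a : (ι ⊕ κ) ⊕ Unit → Γ := Sum.elim (Sum.elim (fun i => p.α i * δ) q.α) fun _ => γ * δ
  let m : (ι ⊕ Unit) ⊕ κ → Γ := Sum.elim (Sum.elim (fun i => p.β i * δ) fun _ => δ) q.α
  let b : (ι ⊕ κ) ⊕ Unit → Γ := Sum.elim (Sum.elim (fun i => p.β i * δ) q.β) fun _ => 1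
  have hx : c.Hm p.x (fun i => p.α i * δ) (fun _ => δ) := (p.hx.shift δ).congr (by simp)
  have h1 : c.Hm M1 a m := ((p.hA.shift δ).blocks hx Hm.zero Hm.zero).blocks
    (Hm.zero.rows Hm.one) ((p.hf.shift δ).cols Hm.zero) Hm.zero
  have h2 : c.Hm M2 m b := (Hm.one.blocks Hm.zero Hm.zero q.hf.neg).blocks
    Hm.zero (Hm.zero.cols q.hA) q.hx
  have e : (p.mul q).bd = M1 * M2 := by
    simp only [M1, M2, Pre.bd, Pre.mul, fromBlocks_multiply]
    ext ((i | i) | i) ((j | j) | j) <;> simp [Matrix.mul_apply, Matrix.one_apply]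
  have hc : Fintype.card ((ι ⊕ κ) ⊕ Unit) = Fintype.card ((ι ⊕ Unit) ⊕ κ) :=
    Fintype.card_congr (rotEquiv _ _ _)
  have s1 : c.Sing M1 ↔ p.Van := by
    rw [← sing_submatrix (c := c) (A := M1) (rotEquiv ι κ Unit) (Equiv.refl _)]
    have e : M1.submatrix (rotEquiv ι κ Unit) (Equiv.refl _) = fromBlocks p.bd 0 0 1 := by
      ext ((i | i) | i) ((j | j) | j) <;> simp [rotEquiv, M1, Pre.bd]
    rw [e, sing_diag p.bd_hm (Hm.one (α := q.α)) rfl rfl, Pre.Van]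
    simp [not_sing_one]
  have s2 : c.Sing M2 ↔ q.Van := by
    rw [← sing_submatrix (c := c) (A := M2)
      (((Equiv.refl ι).sumCongr (Equiv.sumComm κ Unit)).trans (Equiv.sumAssoc ι Unit κ).symm)
      (Equiv.sumAssoc ι κ Unit).symm]
    have e : M2.submatrix
      (((Equiv.refl ι).sumCongr (Equiv.sumComm κ Unit)).trans (Equiv.sumAssoc ι Unit κ).symm)
      (Equiv.sumAssoc ι κ Unit).symm = fromBlocks 1 0 0 q.neg.bd := by
      ext (i | i | i) (j | j | j) <;> simp [M2, Pre.bd, Pre.neg, Pre.withF]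
    rw [e, sing_diag (Hm.one (α := p.α)) q.neg.bd_hm rfl rfl, ← van_neg_iff (p := q), Pre.Van]
    simp [not_sing_one]
  rw [Pre.Van, e, sing_mul h1 h2 hc hc.symm, s1, s2]

lemma Rel.add_mul (p : c.Pre ι γ) (p' : c.Pre ι' γ) (q : c.Pre κ δ) :
    Rel ((p.add p').mul q) ((p.mul q).add (p'.mul q)) := by
  refine .of_inter ⟨fromBlocks (fromBlocks 1 0 0 0) (fromRows 0 1) (fromBlocks 0 1 0 0)
    (fromRows 0 1), fromBlocks (fromBlocks 1 0 0 0) (fromRows 0 1) (fromBlocks 0 1 0 0)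
    (fromRows 0 1), ?_, ?_, ?_, ?_, ?_⟩
  · refine Hm.congr (((Hm.one (α := fun i => p.α i * δ)).blocks Hm.zero Hm.zero
      (Hm.zero (α := q.α) (β := fun i => p'.α i * δ))).blocks
      (Hm.zero.rows (Hm.one (α := q.α))) (Hm.zero.blocks (Hm.one (α := fun i => p'.α i * δ)) Hm.zero
      (Hm.zero (α := q.α) (β := fun i => p'.α i * δ))) (Hm.zero.rows (Hm.one (α := q.α)))) ?_
    rintro ((i | i) | (i | i)) ((j | j) | j) <;> rfl
  · refine Hm.congr (((Hm.one (α := fun i => p.β i * δ)).blocks Hm.zero Hm.zero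
      (Hm.zero (α := q.β) (β := fun i => p'.β i * δ))).blocks
      (Hm.zero.rows (Hm.one (α := q.β))) (Hm.zero.blocks (Hm.one (α := fun i => p'.β i * δ)) Hm.zero
      (Hm.zero (α := q.β) (β := fun i => p'.β i * δ))) (Hm.zero.rows (Hm.one (α := q.β)))) ?_
    rintro ((i | i) | (i | i)) ((j | j) | j) <;> rfl
  · simp only [Pre.add, Pre.mul, fromBlocks_multiply]
    ext ((i | i) | (i | i)) ((j | j) | j) <;> simp [fromBlocks_multiply, fromBlocks_mul_fromRows, fromRows_mul]
  · simp only [Pre.add, Pre.mul, fromBlocks_mul_fromRows]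
    ext ((i | i) | (i | i)) j <;> simp [fromBlocks_mul_fromRows, fromRows_mul]
  · simp only [Pre.add, Pre.mul, fromCols_mul_fromBlocks]
    ext i ((j | j) | j) <;> simp [fromCols_mul_fromBlocks, fromCols_mul_fromRows]

lemma Rel.mul_add (p : c.Pre ι γ) (q : c.Pre κ δ) (q' : c.Pre κ' δ) :
    Rel ((p.mul q).add (p.mul q')) (p.mul (q.add q')) := by
  refine .of_inter ⟨fromBlocks (fromCols 1 0) (fromCols 1 0) (fromBlocks 0 1 0 0)
    (fromBlocks 0 0 0 1), fromBlocks (fromCols 1 0) (fromCols 1 0) (fromBlocks 0 1 0 0)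
    (fromBlocks 0 0 0 1), ?_, ?_, ?_, ?_, ?_⟩
  · refine Hm.congr (((Hm.one (α := fun i => p.α i * δ)).cols (Hm.zero (β := q.α))).blocks
      ((Hm.one (α := fun i => p.α i * δ)).cols (Hm.zero (β := q'.α)))
      (Hm.zero.blocks (Hm.one (α := q.α)) Hm.zero (Hm.zero (α := q'.α)))
      (Hm.zero.blocks Hm.zero Hm.zero (Hm.one (α := q'.α)))) ?_
    rintro (i | i | i) ((j | j) | (j | j)) <;> rfl
  · refine Hm.congr (((Hm.one (α := fun i => p.β i * δ)).cols (Hm.zero (β := q.β))).blocks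
      ((Hm.one (α := fun i => p.β i * δ)).cols (Hm.zero (β := q'.β)))
      (Hm.zero.blocks (Hm.one (α := q.β)) Hm.zero (Hm.zero (α := q'.β)))
      (Hm.zero.blocks Hm.zero Hm.zero (Hm.one (α := q'.β)))) ?_
    rintro (i | i | i) ((j | j) | (j | j)) <;> rfl
  · simp only [Pre.add, Pre.mul, fromBlocks_multiply]
    ext (i | i | i) ((j | j) | (j | j)) <;>
      simp [fromBlocks_multiply, fromCols_mul_fromBlocks, Matrix.mul_fromCols]
  · simp only [Pre.add, Pre.mul, fromBlocks_mul_fromRows]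
    ext (i | i | i) j <;> simp [fromBlocks_mul_fromRows, fromCols_mul_fromRows]
  · simp only [Pre.add, Pre.mul, fromCols_mul_fromBlocks]
    ext i ((j | j) | (j | j)) <;> simp [fromCols_mul_fromBlocks, Matrix.mul_fromCols]

lemma Rel.neg_mul (p : c.Pre ι γ) (q : c.Pre κ δ) : Rel (p.neg.mul q) (p.mul q).neg := by
  refine .of_inter ⟨1, 1, ?_, ?_, ?_, ?_, ?_⟩
  · exact Hm.one (α := Sum.elim (fun i => p.α i * δ) q.α)
  · exact Hm.one (α := Sum.elim (fun i => p.β i * δ) q.β)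
  · simp [Pre.mul, Pre.neg, Pre.withF]
  · simp [Pre.mul, Pre.neg, Pre.withF]
  · ext i (j | j) <;> simp [Pre.mul, Pre.neg, Pre.withF]

lemma Rel.mul_neg (p : c.Pre ι γ) (q : c.Pre κ δ) : Rel (p.mul q.neg) (p.mul q).neg := by
  refine .of_inter ⟨fromBlocks (-1) 0 0 1, fromBlocks (-1) 0 0 1, ?_, ?_, ?_, ?_, ?_⟩
  · exact (Hm.one (α := fun i => p.α i * δ)).neg.blocks Hm.zero Hm.zero (Hm.one (α := q.α))
  · exact (Hm.one (α := fun i => p.β i * δ)).neg.blocks Hm.zero Hm.zero (Hm.one (α := q.β))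
  · simp [Pre.mul, Pre.neg, Pre.withF, fromBlocks_multiply]
  · simp [Pre.mul, Pre.neg, Pre.withF, fromBlocks_mul_fromRows]
  · ext i (j | j) <;> simp [Pre.mul, Pre.neg, Pre.withF, fromCols_mul_fromBlocks]

lemma Rel.mul {p : c.Pre ι γ} {p' : c.Pre ι' γ} {q : c.Pre κ δ} {q' : c.Pre κ' δ}
    (h : Rel p p') (h' : Rel q q') : Rel (p.mul q) (p'.mul q') := by
  have h1 : Rel (p.mul q) (p'.mul q) := by
    have a : ((p.sub p').mul q).Van := (van_mul _ _).2 (Or.inl h)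
    have b : Rel ((p.sub p').mul q) ((p.mul q).sub (p'.mul q)) :=
      (Rel.add_mul p p'.neg q).trans ((Rel.refl _).add (Rel.neg_mul p' q))
    exact b.van.1 a
  have h2 : Rel (p'.mul q) (p'.mul q') := by
    have a : (p'.mul (q.sub q')).Van := (van_mul _ _).2 (Or.inr h')
    have b : Rel (p'.mul (q.sub q')) ((p'.mul q).sub (p'.mul q')) :=
      (Rel.mul_add p' q q'.neg).symm.trans ((Rel.refl _).add (Rel.mul_neg p' q'))
    exact b.van.1 a
  exact h1.trans h2

lemma Inter.mul_assoc (p : c.Pre ι γ) (q : c.Pre κ δ) (r : c.Pre l ε) :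
    Inter ((p.mul q).mul r) (p.mul (q.mul r)) := by
  refine ⟨fromBlocks (fromCols 1 0) 0 (fromBlocks 0 1 0 0) (fromRows 0 1),
    fromBlocks (fromCols 1 0) 0 (fromBlocks 0 1 0 0) (fromRows 0 1), ?_, ?_, ?_, ?_, ?_⟩
  · refine Hm.congr (((Hm.one (α := fun i => p.α i * (δ * ε))).cols
      (Hm.zero (β := fun i => q.α i * ε))).blocks (Hm.zero (β := r.α))
      (Hm.zero.blocks (Hm.one (α := fun i => q.α i * ε)) Hm.zero (Hm.zero (α := r.α)))
      (Hm.zero.rows (Hm.one (α := r.α)))) ?_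
    rintro (i | i | i) ((j | j) | j) <;> simp [Pre.mul, _root_.mul_assoc]
  · refine Hm.congr (((Hm.one (α := fun i => p.β i * (δ * ε))).cols
      (Hm.zero (β := fun i => q.β i * ε))).blocks (Hm.zero (β := r.β))
      (Hm.zero.blocks (Hm.one (α := fun i => q.β i * ε)) Hm.zero (Hm.zero (α := r.β)))
      (Hm.zero.rows (Hm.one (α := r.β)))) ?_
    rintro (i | i | i) ((j | j) | j) <;> simp [Pre.mul, _root_.mul_assoc]
  · simp only [Pre.mul, fromBlocks_multiply]
    ext (i | i | i) ((j | j) | j) <;>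
      simp [fromBlocks_multiply, fromCols_mul_fromBlocks, Matrix.mul_fromCols, fromRows_mul,
        fromBlocks_mul_fromRows, fromCols_mul_fromRows]
  · simp only [Pre.mul, fromBlocks_mul_fromRows]
    ext (i | i | i) j <;> simp [fromBlocks_mul_fromRows, fromCols_mul_fromRows, fromRows_mul]
  · simp only [Pre.mul, fromCols_mul_fromBlocks]
    ext i ((j | j) | j) <;> simp [fromCols_mul_fromBlocks, Matrix.mul_fromCols]

/-- one by one matrix -/
def sc (r : R) : Matrix Unit Unit R := Matrix.of fun _ _ => r

lemma sc_hm {r : R} (hr : r ∈ c.𝒜 γ) (δ : Γ) :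
    c.Hm (sc r) (fun _ => γ * δ) (fun _ => δ) := fun _ _ => by simpa [sc] using hr

lemma sc_hm' {r : R} (hr : r ∈ c.𝒜 γ) :
    c.Hm (sc r) (fun _ => γ) (Pre.ofR 1 c.one_mem).β := fun _ _ => by
  simpa [sc, Pre.ofR] using hr

lemma Inter.sc_one {r : R} (hr : r ∈ c.𝒜 γ) :
    Inter ((Pre.ofR 1 c.one_mem).withF (sc r) (sc_hm' hr)) (Pre.ofR r hr) := by
  refine ⟨sc r, sc r, sc_hm' hr, sc_hm' hr, ?_, ?_, ?_⟩
  · simp [Pre.withF, Pre.ofR]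
  · ext; simp [Pre.withF, Pre.ofR, sc, Matrix.mul_apply]
  · simp [Pre.withF, Pre.ofR]

lemma Inter.ofR_mul {r : R} (hr : r ∈ c.𝒜 γ) (p : c.Pre ι δ) :
    Inter (p.withF (sc r * p.f) ((sc_hm hr δ).mul p.hf)) ((Pre.ofR r hr).mul p) := by
  refine ⟨fromRows 0 1, fromRows (sc r * p.f) 1, Hm.zero.rows Hm.one,
    ((sc_hm hr δ).mul p.hf).rows Hm.one, ?_, ?_, ?_⟩
  · simp [Pre.mul, Pre.withF, Pre.ofR, fromBlocks_mul_fromRows, fromRows_mul, sc]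
  · simp [Pre.mul, Pre.withF, Pre.ofR, fromRows_mul]
  · simp [Pre.mul, Pre.withF, Pre.ofR, fromCols_mul_fromRows]

lemma Inter.ofR_mul_ofR {r s : R} (hr : r ∈ c.𝒜 γ) (hs : s ∈ c.𝒜 δ) :
    Inter ((Pre.ofR s hs).withF (sc r * (Pre.ofR s hs).f) ((sc_hm hr δ).mul (Pre.ofR s hs).hf))
      (Pre.ofR (r * s) (c.mul_mem hr hs)) := by
  refine ⟨sc r, sc r, sc_hm hr δ, sc_hm hr δ, ?_, ?_, ?_⟩
  · simp [Pre.withF, Pre.ofR]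
  · ext; simp [Pre.withF, Pre.ofR, sc, Matrix.mul_apply]
  · simp [Pre.withF, Pre.ofR]

lemma Inter.one_mul (p : c.Pre ι δ) : Inter p ((Pre.ofR 1 c.one_mem).mul p) := by
  have h : c.Hm p.f (fun _ => 1 * δ) p.β := p.hf.congr (by simp)
  refine ⟨fromRows 0 1, fromRows p.f 1, Hm.zero.rows Hm.one, h.rows Hm.one, ?_, ?_, ?_⟩
  · have e : (Matrix.of fun _ _ => 1 : Matrix Unit Unit R) = 1 := by ext; simp
    ext (i | i) j <;> simp [Pre.mul, Pre.withF, Pre.ofR, fromBlocks_mul_fromRows, fromRows_mul, e]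
  · simp [Pre.mul, Pre.withF, Pre.ofR, fromRows_mul]
  · simp [Pre.mul, Pre.withF, Pre.ofR, fromCols_mul_fromRows]

lemma Rel.ofR_add {r s : R} (hr : r ∈ c.𝒜 γ) (hs : s ∈ c.𝒜 γ) :
    Rel ((Pre.ofR r hr).add (Pre.ofR s hs)) (Pre.ofR (r + s) (add_mem hr hs)) := by
  refine .of_inter ⟨fromCols 1 1, fromCols 1 1, Hm.one.cols Hm.one, Hm.one.cols Hm.one, ?_, ?_, ?_⟩
  · simp [Pre.add, Pre.ofR, fromCols_mul_fromBlocks, Matrix.mul_fromCols]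
  · ext; simp [Pre.add, Pre.ofR, fromCols_mul_fromRows]
  · simp [Pre.add, Pre.ofR, Matrix.mul_fromCols]

/-- nonsingular homogeneous matrices -/
structure NS (c : GCtx Γ R) (ι : Type) [Fintype ι] [DecidableEq ι] where
  A : Matrix ι ι R
  α : ι → Γ
  β : ι → Γ
  hA : c.Hm A α β
  ns : ¬ c.Sing A

/-- The expression `f A⁻¹ x`. -/
def NS.ex (M : c.NS ι) {f : Matrix Unit ι R} {x : Matrix ι Unit R}
    (hf : c.Hm f (fun _ => γ) M.β) (hx : c.Hm x M.α (fun _ => δ)) : c.Pre ι (γ * δ⁻¹) where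
  A := M.A
  f := f
  x := x
  α := fun i => M.α i * δ⁻¹
  β := fun i => M.β i * δ⁻¹
  hA := M.hA.shift _
  hf := hf.shift _
  hx := (hx.shift δ⁻¹).congr (by simp)
  ns := M.ns

lemma NS.row_add (M : c.NS ι) {f f' : Matrix Unit ι R} {x : Matrix ι Unit R}
    (hf : c.Hm f (fun _ => γ) M.β) (hf' : c.Hm f' (fun _ => γ) M.β)
    (hx : c.Hm x M.α (fun _ => δ)) :
    Rel (M.ex (hf.add hf') hx) ((M.ex hf hx).add (M.ex hf' hx)) := by
  refine .of_inter ⟨fromRows 1 1, fromRows 1 1, Hm.one.rows Hm.one, Hm.one.rows Hm.one, ?_, ?_, ?_⟩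
  · simp [Pre.add, NS.ex, fromBlocks_mul_fromRows, fromRows_mul]
  · simp [Pre.add, NS.ex, fromRows_mul]
  · simp [Pre.add, NS.ex, fromCols_mul_fromRows]

lemma NS.col_add (M : c.NS ι) {f : Matrix Unit ι R} {x x' : Matrix ι Unit R}
    (hf : c.Hm f (fun _ => γ) M.β) (hx : c.Hm x M.α (fun _ => δ))
    (hx' : c.Hm x' M.α (fun _ => δ)) :
    Rel ((M.ex hf hx).add (M.ex hf hx')) (M.ex hf (hx.add hx')) := by
  refine .of_inter ⟨fromCols 1 1, fromCols 1 1, Hm.one.cols Hm.one, Hm.one.cols Hm.one, ?_, ?_, ?_⟩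
  · simp [Pre.add, NS.ex, fromCols_mul_fromBlocks, Matrix.mul_fromCols]
  · simp [Pre.add, NS.ex, fromCols_mul_fromRows]
  · simp [Pre.add, NS.ex, Matrix.mul_fromCols]

lemma NS.row_smul (M : c.NS ι) {f : Matrix Unit ι R} {x : Matrix ι Unit R} {r : R}
    (hr : r ∈ c.𝒜 ε)
    (hf : c.Hm f (fun _ => γ) M.β) (hx : c.Hm x M.α (fun _ => δ))
    (hf' : c.Hm (sc r * f) (fun _ => γ') M.β) (h : γ' = ε * γ) :
    Inter (M.ex hf' hx) ((Pre.ofR r hr).mul (M.ex hf hx)) := by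
  subst h
  have hf3 : c.Hm (sc r * f) (fun _ => ε * (γ * δ⁻¹)) (fun i => M.β i * δ⁻¹) :=
    (hf'.shift δ⁻¹).congr (by simp [_root_.mul_assoc])
  refine ⟨fromRows 0 1, fromRows (sc r * f) 1, Hm.zero.rows Hm.one,
    hf3.rows Hm.one, ?_, ?_, ?_⟩
  · simp [Pre.mul, NS.ex, Pre.ofR, fromBlocks_mul_fromRows, fromRows_mul, sc]
  · simp [Pre.mul, NS.ex, Pre.ofR, fromRows_mul]
  · simp [Pre.mul, NS.ex, Pre.ofR, fromCols_mul_fromRows]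

lemma NS.col_smul (M : c.NS ι) {f : Matrix Unit ι R} {x : Matrix ι Unit R} {r : R}
    (hr : r ∈ c.𝒜 ε)
    (hf : c.Hm f (fun _ => γ) M.β) (hx : c.Hm x M.α (fun _ => δ))
    (hx' : c.Hm (x * sc r) M.α (fun _ => γ')) (h : γ' = ε⁻¹ * δ) :
    Inter ((M.ex hf hx).mul (Pre.ofR r hr)) (M.ex hf hx') := by
  subst h
  have hx3 : c.Hm x (fun i => M.α i * (ε⁻¹ * δ)⁻¹) (fun _ => ε) :=
    (hx.shift (ε⁻¹ * δ)⁻¹).congr (by simp [_root_.mul_assoc])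
  refine ⟨fromCols 1 x, fromCols 1 0, ?_, ?_, ?_, ?_, ?_⟩
  · refine Hm.congr ((Hm.one (α := fun i => M.α i * (ε⁻¹ * δ)⁻¹)).cols hx3) ?_
    rintro i (j | j) <;> simp [NS.ex, Pre.mul, Pre.ofR, _root_.mul_assoc]
  · refine Hm.congr ((Hm.one (α := fun i => M.β i * (ε⁻¹ * δ)⁻¹)).cols
      (Hm.zero (β := fun _ : Unit => ε))) ?_
    rintro i (j | j) <;> simp [NS.ex, Pre.mul, Pre.ofR, _root_.mul_assoc]
  · simp [Pre.mul, NS.ex, Pre.ofR, fromCols_mul_fromBlocks, Matrix.mul_fromCols]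
  · simp [Pre.mul, NS.ex, Pre.ofR, fromCols_mul_fromRows, sc]
  · simp [Pre.mul, NS.ex, Pre.ofR, Matrix.mul_fromCols]

lemma Inter.mul_one (p : c.Pre ι γ) : Inter (p.mul (Pre.ofR 1 c.one_mem)) p := by
  refine ⟨fromCols 1 p.x, fromCols 1 0, ?_, ?_, ?_, ?_, ?_⟩
  · refine Hm.congr ((Hm.one (α := p.α)).cols p.hx) ?_
    rintro i (j | j) <;> simp [Pre.mul, Pre.ofR]
  · refine Hm.congr ((Hm.one (α := p.β)).cols (Hm.zero (β := fun _ : Unit => 1))) ?_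
    rintro i (j | j) <;> simp [Pre.mul, Pre.ofR]
  · simp [Pre.mul, Pre.ofR, fromCols_mul_fromBlocks, Matrix.mul_fromCols]
  · ext; simp [Pre.mul, Pre.ofR, fromCols_mul_fromRows, Matrix.mul_apply]
  · simp [Pre.mul, Pre.ofR, Matrix.mul_fromCols]

lemma NS.row_self (M : c.NS ι) {f : Matrix Unit ι R} {x : Matrix ι Unit R}
    (hf : c.Hm f (fun _ => γ) M.β) (hx : c.Hm x M.α (fun _ => δ)) (k : ι) (hk : γ = M.α k)
    (h : ∀ j, f () j = M.A k j) (hxk : x k () ∈ c.𝒜 (γ * δ⁻¹)) :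
    Inter (M.ex hf hx) (Pre.ofR (x k ()) hxk) := by
  subst hk
  refine ⟨(1 : Matrix ι ι R).submatrix (fun _ => k) id, f, ?_, hf.shift _, ?_, ?_, ?_⟩
  · exact fun i j => (Hm.one (c := c) (α := fun i => M.α i * δ⁻¹)) k j
  · ext i j
    simp [NS.ex, Pre.ofR, Matrix.mul_apply, Matrix.one_apply, h]
  · ext i j
    simp [NS.ex, Pre.ofR, Matrix.mul_apply, Matrix.one_apply]
  · simp [NS.ex, Pre.ofR]

lemma NS.col_self (M : c.NS ι) {f : Matrix Unit ι R} {x : Matrix ι Unit R}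
    (hf : c.Hm f (fun _ => γ) M.β) (hx : c.Hm x M.α (fun _ => δ)) (k : ι) (hk : δ = M.β k)
    (h : ∀ j, x j () = M.A j k) (hfk : f () k ∈ c.𝒜 (γ * δ⁻¹)) :
    Inter (Pre.ofR 1 c.one_mem |>.withF (sc (f () k)) (sc_hm' hfk)) (M.ex hf hx) := by
  subst hk
  have h1 : c.Hm (Matrix.of fun i _ => (1 : Matrix ι ι R) i k : Matrix ι Unit R)
      (fun i => M.β i * (M.β k)⁻¹) (fun _ => 1) := by
    intro i j
    have := (Hm.one (c := c) (α := fun i => M.β i * (M.β k)⁻¹)) i k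
    simpa using this
  have hx3 := (hx.shift (M.β k)⁻¹).congr (α' := fun i => M.α i * (M.β k)⁻¹) (β' := fun _ => 1)
    (by simp)
  refine ⟨x, _, hx3, h1, ?_, ?_, ?_⟩
  · ext i j
    simp [NS.ex, Pre.ofR, Pre.withF, Matrix.mul_apply, Matrix.one_apply, h]
  · ext i j
    simp [NS.ex, Pre.ofR, Pre.withF, Matrix.mul_apply]
  · ext i j
    simp [NS.ex, Pre.ofR, Pre.withF, Matrix.mul_apply, Matrix.one_apply, sc]

/-- underlying nonsingular matrix -/
def Pre.toNS (p : c.Pre ι γ) : c.NS ι := ⟨p.A, p.α, p.β, p.hA, p.ns⟩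

lemma Inter.toNS (p : c.Pre ι γ) : Inter p (p.toNS.ex p.hf p.hx) := by
  refine ⟨1, 1, Hm.congr (Hm.one (α := p.α)) ?_, Hm.congr (Hm.one (α := p.β)) ?_,
    by simp [NS.ex, Pre.toNS], by simp [NS.ex], by simp [NS.ex]⟩ <;> simp [NS.ex, Pre.toNS]

end mulsec


noncomputable section quot

variable {ι κ l ι' κ' : Type} [Fintype ι] [Fintype κ] [Fintype l]
  [DecidableEq ι] [DecidableEq κ] [DecidableEq l]
  [Fintype ι'] [Fintype κ'] [DecidableEq ι'] [DecidableEq κ']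
variable {γ δ ε γ' : Γ}

/-- The setoid of formal expressions. -/
def preSetoid (γ : Γ) : Setoid (Σ n : ℕ, c.Pre (Fin n) γ) where
  r p q := Rel p.2 q.2
  iseqv := ⟨fun p => Rel.refl p.2, fun h => Rel.symm h, fun h h' => Rel.trans h h'⟩

/-- Homogeneous component of degree `γ`. -/
def KG (γ : Γ) : Type (max u v) := Quotient (c.preSetoid γ)

variable {c}

/-- class of an expression -/
def cls (p : c.Pre ι γ) : c.KG γ :=
  Quotient.mk (c.preSetoid γ) ⟨Fintype.card ι, p.reindex (Fintype.equivFin ι).symm⟩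

lemma cls_eq {p : c.Pre ι γ} {q : c.Pre κ γ} : cls p = cls q ↔ Rel p q := by
  constructor
  · intro h
    have h1 : Rel (p.reindex (Fintype.equivFin ι).symm) (q.reindex (Fintype.equivFin κ).symm) :=
      Quotient.exact h
    exact (Rel.reindex p _).trans (h1.trans (Rel.reindex q _).symm)
  · intro h
    have h1 : Rel (p.reindex (Fintype.equivFin ι).symm) (q.reindex (Fintype.equivFin κ).symm) :=
      (Rel.reindex p _).symm.trans (h.trans (Rel.reindex q _))
    exact Quotient.sound h1

lemma mk_eq_cls {n : ℕ} (p : c.Pre (Fin n) γ) : Quotient.mk (c.preSetoid γ) ⟨n, p⟩ = cls p :=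
  Quotient.sound (Rel.reindex p _)

lemma exists_cls (k : c.KG γ) : ∃ (n : ℕ) (p : c.Pre (Fin n) γ), cls p = k := by
  induction k using Quotient.inductionOn with
  | h a => exact ⟨a.1, a.2, (mk_eq_cls a.2).symm⟩

/-- lifting unary operations -/
def kmap₂ {γ δ ε : Γ} (F : ∀ {n m : ℕ}, c.Pre (Fin n) γ → c.Pre (Fin m) δ → c.KG ε)
    (hF : ∀ {n m n' m' : ℕ} (p : c.Pre (Fin n) γ) (q : c.Pre (Fin m) δ) (p' : c.Pre (Fin n') γ)
      (q' : c.Pre (Fin m') δ), Rel p p' → Rel q q' → F p q = F p' q') :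
    c.KG γ → c.KG δ → c.KG ε :=
  Quotient.lift₂ (fun a b => F a.2 b.2) fun _ _ _ _ h h' => hF _ _ _ _ h h'

instance : Add (c.KG γ) := ⟨kmap₂ (fun p q => cls (p.add q)) fun p q p' q' h h' =>
  cls_eq.2 (h.add h')⟩

instance : Neg (c.KG γ) := ⟨Quotient.lift (fun a => cls a.2.neg) fun _ _ h => cls_eq.2 (Rel.neg h)⟩

instance : Zero (c.KG γ) := ⟨cls (Pre.zero c γ)⟩

/-- multiplication of homogeneous components -/
def kmul : c.KG γ → c.KG δ → c.KG (γ * δ) :=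
  kmap₂ (fun p q => cls (p.mul q)) fun p q p' q' h h' => cls_eq.2 (h.mul h')

lemma cls_add (p : c.Pre ι γ) (q : c.Pre κ γ) : cls p + cls q = cls (p.add q) :=
  cls_eq.2 ((Rel.reindex p _).symm.add (Rel.reindex q _).symm)

lemma cls_mul (p : c.Pre ι γ) (q : c.Pre κ δ) : kmul (cls p) (cls q) = cls (p.mul q) :=
  cls_eq.2 ((Rel.reindex p _).symm.mul (Rel.reindex q _).symm)

lemma cls_neg (p : c.Pre ι γ) : -cls p = cls p.neg :=
  cls_eq.2 (Rel.reindex p _).symm.neg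

lemma cls_zero : cls (Pre.zero c γ) = 0 := rfl

lemma cls_eq_zero {p : c.Pre ι γ} : cls p = 0 ↔ p.Van := by
  rw [← cls_zero, cls_eq, Rel.zero_iff]

lemma KG.add_comm' (a b : c.KG γ) : a + b = b + a := by
  obtain ⟨n, p, rfl⟩ := exists_cls a
  obtain ⟨m, q, rfl⟩ := exists_cls b
  rw [cls_add, cls_add, cls_eq]
  exact Rel.add_comm p q

lemma KG.add_zero' (a : c.KG γ) : a + 0 = a := by
  obtain ⟨n, p, rfl⟩ := exists_cls a
  rw [← cls_zero, cls_add, cls_eq]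
  exact Rel.add_zero p

instance : AddCommGroup (c.KG γ) where
  add_assoc a b d := by
    obtain ⟨n, p, rfl⟩ := exists_cls a
    obtain ⟨m, q, rfl⟩ := exists_cls b
    obtain ⟨m, r, rfl⟩ := exists_cls d
    rw [cls_add, cls_add, cls_add, cls_add, cls_eq]
    exact Rel.add_assoc p q r
  zero_add a := by rw [KG.add_comm', KG.add_zero']
  add_zero a := KG.add_zero' a
  nsmul := nsmulRec
  zsmul := zsmulRec
  neg_add_cancel a := by
    obtain ⟨n, p, rfl⟩ := exists_cls a
    rw [cls_neg, cls_add, ← cls_zero, cls_eq]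
    exact Rel.add_neg p
  add_comm := KG.add_comm'

lemma kmul_add (a : c.KG γ) (b b' : c.KG δ) : kmul a (b + b') = kmul a b + kmul a b' := by
  obtain ⟨n, p, rfl⟩ := exists_cls a
  obtain ⟨m, q, rfl⟩ := exists_cls b
  obtain ⟨m, r, rfl⟩ := exists_cls b'
  rw [cls_add, cls_mul, cls_mul, cls_mul, cls_add, cls_eq]
  exact (Rel.mul_add p q r).symm

lemma add_kmul (a a' : c.KG γ) (b : c.KG δ) : kmul (a + a') b = kmul a b + kmul a' b := by
  obtain ⟨n, p, rfl⟩ := exists_cls a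
  obtain ⟨m, q, rfl⟩ := exists_cls b
  obtain ⟨m, r, rfl⟩ := exists_cls a'
  rw [cls_add, cls_mul, cls_mul, cls_mul, cls_add, cls_eq]
  exact (Rel.add_mul p r q)

variable (c) in
/-- The components indexed by the additive version of the group. -/
abbrev KA (a : Additive Γ) : Type (max u v) := c.KG a.toMul

lemma sigma_eq_of_inter {p : c.Pre ι γ} {q : c.Pre κ γ'} (h : γ = γ') (hi : Inter p q) :
    (⟨Additive.ofMul γ, cls p⟩ : GradedMonoid c.KA) = ⟨Additive.ofMul γ', cls q⟩ := by
  subst h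
  rw [cls_eq.2 (.of_inter hi)]

instance : GradedMonoid.GMul c.KA := ⟨fun a b => kmul a b⟩

instance : GradedMonoid.GOne c.KA := ⟨cls (Pre.ofR 1 c.one_mem)⟩

instance : GradedMonoid.GMonoid c.KA where
  one_mul := by
    rintro ⟨i, a⟩
    obtain ⟨n, p, rfl⟩ := exists_cls a
    refine Eq.trans ?_ (sigma_eq_of_inter (one_mul _).symm (Inter.one_mul p)).symm
    exact congrArg (Sigma.mk _) (cls_mul _ _)
  mul_one := by
    rintro ⟨i, a⟩
    obtain ⟨n, p, rfl⟩ := exists_cls a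
    refine Eq.trans ?_ (sigma_eq_of_inter (mul_one _) (Inter.mul_one p))
    exact congrArg (Sigma.mk _) (cls_mul _ _)
  mul_assoc := by
    rintro ⟨i, a⟩ ⟨j, b⟩ ⟨k, d⟩
    obtain ⟨n, p, rfl⟩ := exists_cls a
    obtain ⟨n, q, rfl⟩ := exists_cls b
    obtain ⟨n, r, rfl⟩ := exists_cls d
    refine Eq.trans ?_ ((sigma_eq_of_inter (mul_assoc _ _ _) (Inter.mul_assoc p q r)).trans ?_)
    · refine congrArg (Sigma.mk _) ?_
      change kmul (kmul (cls p) (cls q)) (cls r) = _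
      rw [cls_mul, cls_mul]
    · refine congrArg (Sigma.mk _) ?_
      change _ = kmul (cls p) (kmul (cls q) (cls r))
      rw [cls_mul, cls_mul]

lemma kmul_zero (a : c.KG γ) : kmul a (0 : c.KG δ) = 0 := by
  have := kmul_add a (0 : c.KG δ) 0
  simpa using this

lemma zero_kmul (a : c.KG δ) : kmul (0 : c.KG γ) a = 0 := by
  have := add_kmul (0 : c.KG γ) 0 a
  simpa using this

instance : DirectSum.GRing c.KA where
  mul_zero a := kmul_zero a
  zero_mul a := zero_kmul a
  mul_add a b d := kmul_add a b d
  add_mul a b d := add_kmul a b d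
  natCast n := n • (GradedMonoid.GOne.one : c.KA 0)
  natCast_zero := by simp
  natCast_succ n := by simp [add_smul]
  intCast n := n • (GradedMonoid.GOne.one : c.KA 0)
  intCast_ofNat n := by simp
  intCast_negSucc_ofNat n := by
    rw [Int.negSucc_eq, neg_smul]
    congr 1

end quot


noncomputable section ringK

variable {ι κ l : Type} [Fintype ι] [Fintype κ] [Fintype l]
  [DecidableEq ι] [DecidableEq κ] [DecidableEq l]
variable {γ δ ε γ' : Γ} [DecidableEq Γ]

/-- The graded division ring. -/
abbrev KK : Type (max u v) := DirectSum (Additive Γ) c.KA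

variable {c}

/-- The element of `KK` given by an expression. -/
def el (p : c.Pre ι γ) : c.KK := DirectSum.of c.KA (Additive.ofMul γ) (cls p)

lemma el_inter {p : c.Pre ι γ} {q : c.Pre κ γ'} (hi : Inter p q) (h : γ = γ') : el p = el q :=
  DirectSum.of_eq_of_gradedMonoid_eq (sigma_eq_of_inter h hi)

lemma el_rel {p : c.Pre ι γ} {q : c.Pre κ γ} (hi : Rel p q) : el p = el q := by
  unfold el
  rw [cls_eq.2 hi]

lemma el_add (p : c.Pre ι γ) (q : c.Pre κ γ) : el p + el q = el (p.add q) := by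
  unfold el
  rw [← cls_add, map_add]

lemma el_neg (p : c.Pre ι γ) : -el p = el p.neg := by
  unfold el
  rw [← cls_neg, map_neg]

lemma el_mul (p : c.Pre ι γ) (q : c.Pre κ δ) : el p * el q = el (p.mul q) := by
  unfold el
  rw [← cls_mul, DirectSum.of_mul_of]
  rfl

lemma el_eq_zero {p : c.Pre ι γ} : el p = 0 ↔ p.Van := by
  unfold el
  rw [← cls_eq_zero, ← map_zero (DirectSum.of c.KA (Additive.ofMul γ))]
  exact (DirectSum.of_injective (β := c.KA) _).eq_iff

lemma el_one : el (Pre.ofR (1 : R) c.one_mem) = 1 := rfl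

variable (c) in
/-- The grading of `KK`. -/
def grad (γ : Γ) : AddSubgroup c.KK := (DirectSum.of c.KA (Additive.ofMul γ)).range

lemma el_mem (p : c.Pre ι γ) : el p ∈ c.grad γ := ⟨_, rfl⟩

lemma exists_el {x : c.KK} (h : x ∈ c.grad γ) : ∃ (n : ℕ) (p : c.Pre (Fin n) γ), el p = x := by
  obtain ⟨k, rfl⟩ := h
  obtain ⟨n, p, rfl⟩ := exists_cls k
  exact ⟨n, p, rfl⟩

lemma kk_induction {motive : c.KK → Prop} (x : c.KK) (zero : motive 0)
    (hel : ∀ (γ : Γ) (n : ℕ) (p : c.Pre (Fin n) γ), motive (el p))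
    (add : ∀ x y, motive x → motive y → motive (x + y)) : motive x := by
  refine DirectSum.induction_on x zero (fun i k => ?_) add
  obtain ⟨n, p, rfl⟩ := exists_cls k
  exact hel i.toMul n p

variable (c) in
lemma grad_internal : DirectSum.IsInternal c.grad := by
  let inv : c.KK →+ DirectSum Γ (fun γ => c.grad γ) :=
    DirectSum.toAddMonoid fun a => (DirectSum.of (fun γ => c.grad γ) a.toMul).comp
      (DirectSum.of c.KA a).rangeRestrict
  constructor
  · refine Function.LeftInverse.injective (g := inv) fun x => ?_
    induction x using DirectSum.induction_on with
    | zero => simp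
    | of i x =>
      obtain ⟨x, k, rfl⟩ := x
      rw [DirectSum.coeAddMonoidHom_of]
      simp only [inv]
      rw [DirectSum.toAddMonoid_of]
      rfl
    | add x y hx hy => rw [map_add, map_add, hx, hy]
  · intro x
    induction x using kk_induction with
    | zero => exact ⟨0, map_zero _⟩
    | hel γ n p => exact ⟨DirectSum.of (fun γ => c.grad γ) γ ⟨el p, el_mem p⟩,
        DirectSum.coeAddMonoidHom_of _ _ _⟩
    | add x y hx hy =>
      obtain ⟨a, rfl⟩ := hx
      obtain ⟨b, rfl⟩ := hy
      exact ⟨a + b, map_add _ _ _⟩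

lemma grad_mul {x y : c.KK} (hx : x ∈ c.grad γ) (hy : y ∈ c.grad δ) : x * y ∈ c.grad (γ * δ) := by
  obtain ⟨n, p, rfl⟩ := exists_el hx
  obtain ⟨m, q, rfl⟩ := exists_el hy
  rw [el_mul]
  exact el_mem _

variable (c) in
/-- component of the structure map -/
def phiG (γ : Γ) : c.𝒜 γ →+ c.KK :=
  AddMonoidHom.mk' (fun r => el (Pre.ofR r.1 r.2)) fun r s => by
    rw [el_add]
    exact (el_rel (Rel.ofR_add r.2 s.2)).symm

variable (c) in
/-- additive version of the structure map -/
def phiA (h : DirectSum.IsInternal c.𝒜) : R →+ c.KK :=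
  (DirectSum.toAddMonoid c.phiG).comp
    (AddEquiv.ofBijective (DirectSum.coeAddMonoidHom c.𝒜) h).symm.toAddMonoidHom

lemma phiA_apply (h : DirectSum.IsInternal c.𝒜) {r : R} (hr : r ∈ c.𝒜 γ) :
    c.phiA h r = el (Pre.ofR r hr) := by
  have : (AddEquiv.ofBijective (DirectSum.coeAddMonoidHom c.𝒜) h).symm r =
      DirectSum.of (fun γ => c.𝒜 γ) γ ⟨r, hr⟩ := by
    rw [AddEquiv.symm_apply_eq]
    exact (DirectSum.coeAddMonoidHom_of c.𝒜 γ ⟨r, hr⟩).symm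
  change DirectSum.toAddMonoid c.phiG
    ((AddEquiv.ofBijective (DirectSum.coeAddMonoidHom c.𝒜) h).symm r) = _
  rw [this, DirectSum.toAddMonoid_of]
  rfl

lemma r_induction (h : DirectSum.IsInternal c.𝒜) {motive : R → Prop} (x : R) (zero : motive 0)
    (hel : ∀ (γ : Γ) (r : R), r ∈ c.𝒜 γ → motive r)
    (add : ∀ x y, motive x → motive y → motive (x + y)) : motive x := by
  obtain ⟨z, rfl⟩ := h.2 x
  induction z using DirectSum.induction_on with
  | zero => simpa using zero
  | of i x =>
    rw [DirectSum.coeAddMonoidHom_of]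
    exact hel _ _ x.2
  | add x y hx hy => rw [map_add]; exact add _ _ hx hy

variable (c) in
/-- The structure map -/
def phi (h : DirectSum.IsInternal c.𝒜) : R →+* c.KK where
  toFun := c.phiA h
  map_zero' := map_zero _
  map_add' := map_add _
  map_one' := phiA_apply h c.one_mem
  map_mul' x y := by
    induction x using r_induction h with
    | zero => simp
    | add x x' hx hx' => rw [add_mul, map_add, map_add, add_mul, hx, hx']
    | hel γ r hr =>
      induction y using r_induction h with
      | zero => simp
      | add x x' hx hx' => rw [mul_add, map_add, map_add, mul_add, hx, hx']
      | hel δ s hs =>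
        rw [phiA_apply h hr, phiA_apply h hs, phiA_apply h (c.mul_mem hr hs), el_mul,
          ← el_inter (Inter.ofR_mul hr _) rfl, el_inter (Inter.ofR_mul_ofR hr hs) rfl]

lemma phi_apply (h : DirectSum.IsInternal c.𝒜) {r : R} (hr : r ∈ c.𝒜 γ) :
    c.phi h r = el (Pre.ofR r hr) := phiA_apply h hr

end ringK


noncomputable section inverse

variable {ι κ l : Type} [Fintype ι] [Fintype κ] [Fintype l]
  [DecidableEq ι] [DecidableEq κ] [DecidableEq l]
variable {γ δ ε γ' : Γ} [DecidableEq Γ]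
variable {c}

/-- unit row -/
def eR (j : ι) : Matrix Unit ι R := Matrix.of fun _ k => (1 : Matrix ι ι R) j k

/-- unit column -/
def eC (i : ι) : Matrix ι Unit R := Matrix.of fun k _ => (1 : Matrix ι ι R) k i

lemma eR_hm (β : ι → Γ) (j : ι) : c.Hm (eR j) (fun _ => β j) β :=
  fun _ k => (Hm.one (c := c) (α := β)) j k

lemma eC_hm (α : ι → Γ) (j : ι) : c.Hm (eC j) α (fun _ => α j) :=
  fun k _ => (Hm.one (c := c) (α := α)) k j

lemma NS.el_congr (M : c.NS ι) {f f' : Matrix Unit ι R} {x x' : Matrix ι Unit R}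
    {hf : c.Hm f (fun _ => γ) M.β} {hx : c.Hm x M.α (fun _ => δ)}
    {hf' : c.Hm f' (fun _ => γ) M.β} {hx' : c.Hm x' M.α (fun _ => δ)}
    (e1 : f = f') (e2 : x = x') : el (M.ex hf hx) = el (M.ex hf' hx') := by
  subst e1 e2
  rfl

lemma NS.el_row (hi : DirectSum.IsInternal c.𝒜) (M : c.NS ι) {f : Matrix Unit ι R}
    {x : Matrix ι Unit R}
    (hf : c.Hm f (fun _ => γ) M.β) (hx : c.Hm x M.α (fun _ => δ)) :
    el (M.ex hf hx) = ∑ j, c.phi hi (f () j) * el (M.ex (eR_hm M.β j) hx) := by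
  classical
  have key : ∀ (s : Finset ι) (g : Matrix Unit ι R) (hg : c.Hm g (fun _ => γ) M.β)
      (e : ∀ j, g () j = if j ∈ s then f () j else 0), el (M.ex hg hx) =
        ∑ j ∈ s, c.phi hi (f () j) * el (M.ex (eR_hm M.β j) hx) := by
    intro s
    induction s using Finset.induction_on with
    | empty =>
      intro g hg e
      rw [Finset.sum_empty, el_eq_zero]
      refine van_zero_row _ ?_
      ext i j
      exact (by simpa using e j : g () j = 0)
    | insert a s ha ih =>
      intro g hg e
      have hfa : f () a ∈ c.𝒜 (γ * (M.β a)⁻¹) := hf () a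
      have h1 : c.Hm (sc (f () a) * (eR a : Matrix Unit ι R)) (fun _ => γ) M.β :=
        Hm.mul (β := fun _ => M.β a) (fun i j => hfa) (eR_hm M.β a)
      have h2 : c.Hm (Matrix.of fun _ j => if j ∈ s then f () j else 0 : Matrix Unit ι R) (fun _ => γ) M.β := by
        intro i j
        by_cases h : j ∈ s
        · simpa [h] using hf () j
        · simp [h]
      have e1 : g = sc (f () a) * (eR a : Matrix Unit ι R) + (Matrix.of fun _ j => if j ∈ s then f () j else 0 : Matrix Unit ι R) := by
        ext i j
        rw [e j, Matrix.add_apply, Matrix.mul_apply, Fintype.sum_unique]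
        by_cases h : j = a
        · subst h
          simp [ha, sc, eR]
        · simp [h, Ne.symm h, sc, eR, Matrix.mul_apply, Matrix.one_apply]
      rw [Finset.sum_insert ha, ← ih _ h2 (fun j => by simp), M.el_congr (hf' := h1.add h2)
        (hx' := hx) e1 rfl, el_rel (M.row_add h1 h2 hx), ← el_add]
      congr 1
      rw [el_inter (M.row_smul hfa (eR_hm M.β a) hx h1 (by simp)) (by simp [_root_.mul_assoc]),
        ← el_mul, phi_apply hi hfa]
  simpa using key Finset.univ f hf (by simp)

lemma NS.el_col (hi : DirectSum.IsInternal c.𝒜) (M : c.NS ι) {f : Matrix Unit ι R}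
    {x : Matrix ι Unit R}
    (hf : c.Hm f (fun _ => γ) M.β) (hx : c.Hm x M.α (fun _ => δ)) :
    el (M.ex hf hx) = ∑ j, el (M.ex hf (eC_hm M.α j)) * c.phi hi (x j ()) := by
  classical
  have key : ∀ (s : Finset ι) (g : Matrix ι Unit R) (hg : c.Hm g M.α (fun _ => δ))
      (e : ∀ j, g j () = if j ∈ s then x j () else 0), el (M.ex hf hg) =
        ∑ j ∈ s, el (M.ex hf (eC_hm M.α j)) * c.phi hi (x j ()) := by
    intro s
    induction s using Finset.induction_on with
    | empty =>
      intro g hg e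
      rw [Finset.sum_empty]
      have e0 : g = 0 := by
        ext j i
        simpa using e j
      have : el (M.ex hf hg) + el (M.ex hf hg) = el (M.ex hf hg) := by
        rw [el_add, el_rel (M.col_add hf hg hg)]
        exact M.el_congr rfl (by simp [e0])
      simpa using this
    | insert a s ha ih =>
      intro g hg e
      have hfa : x a () ∈ c.𝒜 (M.α a * δ⁻¹) := hx a ()
      have h1 : c.Hm ((eC a : Matrix ι Unit R) * sc (x a ())) M.α (fun _ => δ) :=
        Hm.mul (β := fun _ => M.α a) (eC_hm M.α a) (fun i j => hfa)
      have h2 : c.Hm (Matrix.of fun j _ => if j ∈ s then x j () else 0 : Matrix ι Unit R) M.α (fun _ => δ) := by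
        intro j i
        by_cases h : j ∈ s
        · simpa [h] using hx j ()
        · simp [h]
      have e1 : g = (eC a : Matrix ι Unit R) * sc (x a ()) + (Matrix.of fun j _ => if j ∈ s then x j () else 0 : Matrix ι Unit R) := by
        ext j i
        rw [e j, Matrix.add_apply, Matrix.mul_apply, Fintype.sum_unique]
        by_cases h : j = a
        · subst h
          simp [ha, sc, eC]
        · simp [h, sc, eC, Matrix.mul_apply, Matrix.one_apply]
      rw [Finset.sum_insert ha, ← ih _ h2 (fun j => by simp), M.el_congr (hx' := h1.add h2)
        (hf' := hf) rfl e1, ← el_rel (M.col_add hf h1 h2), ← el_add]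
      congr 1
      rw [← el_inter (M.col_smul hfa hf (eC_hm M.α a) h1 (by simp)) (by simp [_root_.mul_assoc]),
        ← el_mul, phi_apply hi hfa]
  simpa using key Finset.univ x hx (by simp)

/-- The inverse matrix. -/
def NS.inv (M : c.NS ι) : Matrix ι ι c.KK :=
  Matrix.of fun j i => el (M.ex (eR_hm M.β j) (eC_hm M.α i))

lemma NS.el_eq (hi : DirectSum.IsInternal c.𝒜) (M : c.NS ι) {f : Matrix Unit ι R}
    {x : Matrix ι Unit R}
    (hf : c.Hm f (fun _ => γ) M.β) (hx : c.Hm x M.α (fun _ => δ)) :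
    el (M.ex hf hx) = (f.map (c.phi hi) * (M.inv * x.map (c.phi hi))) () () := by
  rw [M.el_row hi hf hx, Matrix.mul_apply]
  refine Finset.sum_congr rfl fun j _ => ?_
  rw [M.el_col hi, Matrix.mul_apply]
  rfl

lemma NS.mul_inv (hi : DirectSum.IsInternal c.𝒜) (M : c.NS ι) :
    M.A.map (c.phi hi) * M.inv = 1 := by
  refine Matrix.ext fun k i => ?_
  have hf : c.Hm (Matrix.of fun _ j => M.A k j : Matrix Unit ι R) (fun _ => M.α k) M.β :=
    fun _ j => M.hA k j
  have h1 : (eC i : Matrix ι Unit R) k () ∈ c.𝒜 (M.α k * (M.α i)⁻¹) := eC_hm M.α i k ()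
  have := el_inter (M.row_self hf (eC_hm M.α i) k rfl (fun j => rfl) h1) rfl
  rw [M.el_row hi, ← phi_apply hi] at this
  rw [Matrix.mul_apply]
  refine Eq.trans this ?_
  change c.phi hi ((1 : Matrix ι ι R) k i) = _
  rw [Matrix.one_apply, Matrix.one_apply]
  split_ifs
  · exact map_one _
  · exact map_zero _

lemma NS.inv_mul (hi : DirectSum.IsInternal c.𝒜) (M : c.NS ι) :
    M.inv * M.A.map (c.phi hi) = 1 := by
  refine Matrix.ext fun k i => ?_
  have hx : c.Hm (Matrix.of fun j _ => M.A j i : Matrix ι Unit R) M.α (fun _ => M.β i) :=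
    fun j _ => M.hA j i
  have h1 : (eR k : Matrix Unit ι R) () i ∈ c.𝒜 (M.β k * (M.β i)⁻¹) := eR_hm M.β k () i
  have := el_inter (M.col_self (eR_hm M.β k) hx i rfl (fun j => rfl) h1) rfl
  rw [M.el_col hi, el_inter (Inter.sc_one h1) rfl, ← phi_apply hi] at this
  rw [Matrix.mul_apply]
  refine Eq.trans this.symm ?_
  change c.phi hi ((1 : Matrix ι ι R) k i) = _
  rw [Matrix.one_apply, Matrix.one_apply]
  split_ifs
  · exact map_one _
  · exact map_zero _

instance : Nontrivial c.KK := by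
  refine ⟨1, 0, fun h => ?_⟩
  rw [← el_one, el_eq_zero] at h
  have h1 : c.Hm (fromBlocks 0 1 1 (-1) : Matrix (Unit ⊕ Unit) (Unit ⊕ Unit) R)
      (fun _ => 1) (fun _ => 1) := by
    refine (Hm.congr ((Hm.zero (α := fun _ => 1) (β := fun _ => 1)).blocks (Hm.one (α := fun _ => 1)) (Hm.one (α := fun _ => 1)) (Hm.one (α := fun _ => 1)).neg) ?_)
    rintro (i | i) (j | j) <;> rfl
  have h2 : c.Hm (Pre.ofR (1 : R) c.one_mem).bd (fun _ => 1) (fun _ => 1) := by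
    refine (Pre.bd_hm _).congr ?_
    rintro (i | i) (j | j) <;> rfl
  have h3 : (Pre.ofR (1 : R) c.one_mem).bd * fromBlocks 0 1 1 (-1) = 1 := by
    have e : (Matrix.of fun _ _ => 1 : Matrix Unit Unit R) = 1 := by ext; simp
    simp [Pre.bd, Pre.ofR, fromBlocks_multiply, e]
  have h4 := (sing_mul h2 h1 rfl rfl).2 (Or.inl h)
  rw [h3] at h4
  exact not_sing_one h4

/-- Schur complement -/
lemma NS.schur (hi : DirectSum.IsInternal c.𝒜) (M : c.NS ι) {f : Matrix Unit ι R}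
    {x : Matrix ι Unit R} {d : R} (hf : c.Hm f (fun _ => γ) M.β) (hx : c.Hm x M.α (fun _ => δ))
    (hd : d ∈ c.𝒜 (γ * δ⁻¹)) :
    c.phi hi d - (f.map (c.phi hi) * (M.inv * x.map (c.phi hi))) () () ∈ c.grad (γ * δ⁻¹) ∧
    (c.phi hi d - (f.map (c.phi hi) * (M.inv * x.map (c.phi hi))) () () = 0 ↔
      c.Sing (fromBlocks M.A x f (sc d))) := by
  rw [← M.el_eq hi hf hx, phi_apply hi hd, sub_eq_add_neg, el_neg, el_add]
  refine ⟨el_mem _, ?_⟩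
  rw [el_eq_zero]
  let L : Matrix ((Unit ⊕ ι) ⊕ Unit) ((Unit ⊕ ι) ⊕ Unit) R :=
    fromBlocks 1 0 (fromCols 1 0) (-1)
  have hq := ((Pre.ofR d hd).sub (M.ex hf hx)).bd_hm
  have hr : c.Hm (fromCols 1 0 : Matrix Unit (Unit ⊕ ι) R) (fun _ => γ * δ⁻¹)
    ((Pre.ofR d hd).sub (M.ex hf hx)).α := Hm.one.cols Hm.zero
  have hL : c.Hm L (Sum.elim ((Pre.ofR d hd).sub (M.ex hf hx)).α fun _ => γ * δ⁻¹)
      (Sum.elim ((Pre.ofR d hd).sub (M.ex hf hx)).α fun _ => γ * δ⁻¹) :=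
    Hm.one.blocks Hm.zero hr Hm.one.neg
  have sL : ¬ c.Sing L := by
    rw [sing_lower Hm.one Hm.one.neg hr rfl rfl]
    have h1 := sing_mul (Hm.one (c := c) (α := fun _ : Unit => (1 : Γ))).neg
      (Hm.one (c := c) (α := fun _ : Unit => (1 : Γ))).neg rfl rfl
    simp [not_sing_one] at h1
    simp [not_sing_one, h1]
  have e : (L * ((Pre.ofR d hd).sub (M.ex hf hx)).bd).submatrix
      (Equiv.sumAssoc Unit ι Unit).symm (Equiv.sumAssoc Unit ι Unit).symm =
      fromBlocks 1 (fromCols 0 (sc d)) 0 (fromBlocks M.A x f (sc d)) := by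
    simp only [L, Pre.bd, fromBlocks_multiply, Pre.add, Pre.neg, Pre.withF, Pre.ofR, NS.ex]
    ext (i | i | i) (j | j | j) <;>
      simp [fromCols_mul_fromBlocks, fromCols_mul_fromRows, sc]
  have h5 := sing_mul hL hq rfl rfl
  rw [← sing_submatrix (c := c) (Equiv.sumAssoc Unit ι Unit).symm
    (Equiv.sumAssoc Unit ι Unit).symm, e] at h5
  have hd' : c.Hm (sc d) (fun _ => γ) (fun _ => δ) := fun _ _ => hd
  have hcol : c.Hm (fromCols 0 (sc d) : Matrix Unit (ι ⊕ Unit) R) (fun _ => γ)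
      (Sum.elim M.β fun _ => δ) := Hm.zero.cols hd'
  rw [sing_upper Hm.one (M.hA.blocks hx hf hd') hcol rfl rfl] at h5
  simp only [not_sing_one, false_or, sL] at h5
  exact h5.symm

/-- Nonzero homogeneous elements are units. -/
lemma isUnit_el (hi : DirectSum.IsInternal c.𝒜) (p : c.Pre ι γ) (h : el p ≠ 0) :
    IsUnit (el p) := by
  have hs : ¬ c.Sing p.bd := fun k => h (el_eq_zero.2 k)
  let N : c.NS (ι ⊕ Unit) := ⟨p.bd, _, _, p.bd_hm, hs⟩
  let M := p.toNS
  let φ := c.phi hi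
  have e0 : el p = (p.f.map φ * (M.inv * p.x.map φ)) () () := by
    rw [← M.el_eq hi p.hf p.hx]
    exact el_inter (Inter.toNS p) (by simp)
  have hN : N.A.map φ = fromBlocks (p.A.map φ) (p.x.map φ) (p.f.map φ) 0 := by
    simp [N, Pre.bd, fromBlocks_map]
  have h1 := N.mul_inv hi
  have h2 := N.inv_mul hi
  change N.A.map φ * _ = 1 at h1
  change _ * N.A.map φ = 1 at h2
  have m1 : p.A.map φ * M.inv = 1 := M.mul_inv hi
  have m2 : M.inv * p.A.map φ = 1 := M.inv_mul hi
  rw [hN, ← fromBlocks_toBlocks N.inv, fromBlocks_multiply, ← fromBlocks_one,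
    fromBlocks_inj] at h1 h2
  obtain ⟨-, a12, -, a22⟩ := h1
  obtain ⟨-, -, b21, b22⟩ := h2
  generalize N.inv.toBlocks₁₂ = D12 at *
  generalize N.inv.toBlocks₂₁ = D21 at *
  generalize N.inv.toBlocks₂₂ = D22 at *
  generalize N.inv.toBlocks₁₁ = D11 at *
  have c1 : D12 = -(M.inv * (p.x.map φ * D22)) := by
    have := congrArg (M.inv * ·) a12
    simp only [Matrix.mul_add, ← Matrix.mul_assoc, m2, Matrix.one_mul, Matrix.mul_zero] at this
    rw [Matrix.mul_assoc] at this
    exact eq_neg_of_add_eq_zero_left this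
  have c2 : D21 = -(D22 * (p.f.map φ * M.inv)) := by
    have := congrArg (· * M.inv) b21
    simp only [Matrix.add_mul, Matrix.mul_assoc, m1, Matrix.mul_one, Matrix.zero_mul] at this
    exact eq_neg_of_add_eq_zero_left this
  have u1 : (p.f.map φ * (M.inv * p.x.map φ)) * (-D22) = 1 := by
    simp only [Matrix.zero_mul, _root_.add_zero] at a22
    rw [← a22, c1]
    simp [Matrix.mul_assoc]
  have u2 : (-D22) * (p.f.map φ * (M.inv * p.x.map φ)) = 1 := by
    simp only [Matrix.mul_zero, _root_.add_zero] at b22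
    rw [← b22, c2]
    simp [Matrix.mul_assoc]
  have v1 := congrFun (congrFun u1 ()) ()
  have v2 := congrFun (congrFun u2 ()) ()
  rw [Matrix.mul_apply, Fintype.sum_unique] at v1 v2
  rw [e0]
  exact ⟨⟨_, _, v1, v2⟩, rfl⟩

end inverse


noncomputable section final

section abstract_lin
variable {κ K : Type*} [Fintype κ] [DecidableEq κ] [Ring K]

/-- Solutions of `B v ∈ T` lie in `T`. -/
def WW {κ κ' K : Type*} [Fintype κ'] [Ring K] (T : Subring K) (B : Matrix κ κ' K) : Prop :=
  ∀ v : κ' → K, (∀ i, (B *ᵥ v) i ∈ T) → ∀ j, v j ∈ T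

lemma dot_mem (T : Subring K) {y v : κ → K} (hy : ∀ k, y k ∈ T) (hv : ∀ k, v k ∈ T) :
    y ⬝ᵥ v ∈ T :=
  Subring.sum_mem _ fun k _ => T.mul_mem (hy k) (hv k)

lemma ww_block (T : Subring K) (B N : Matrix κ κ K) (h1 : B * N = 1)
    (x y : κ → K) (d : K) (hx : ∀ k, x k ∈ T) (hy : ∀ k, y k ∈ T) (hd : d ∈ T)
    (hB : WW T B)
    (hs : d - y ⬝ᵥ (N *ᵥ x) ∈ T → ∃ u ∈ T, u * (d - y ⬝ᵥ (N *ᵥ x)) = 1)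
    (v : κ → K) (t : K) (hv : ∀ k, (B *ᵥ v) k + x k * t ∈ T) (ht : y ⬝ᵥ v + d * t ∈ T) :
    (∀ k, v k ∈ T) ∧ t ∈ T := by
  have hNx : ∀ k, (N *ᵥ x) k ∈ T := by
    refine hB _ fun i => ?_
    rw [Matrix.mulVec_mulVec, h1, Matrix.one_mulVec]
    exact hx i
  have hsT : d - y ⬝ᵥ (N *ᵥ x) ∈ T := T.sub_mem hd (dot_mem T hy hNx)
  obtain ⟨u, hu, hus⟩ := hs hsT
  have hz : ∀ k, v k + (N *ᵥ x) k * t ∈ T := by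
    refine hB (fun k => v k + (N *ᵥ x) k * t) fun i => ?_
    have e : (B *ᵥ fun k => v k + (N *ᵥ x) k * t) i = (B *ᵥ v) i + x i * t := by
      have e1 : x i = (B *ᵥ (N *ᵥ x)) i := by
        rw [Matrix.mulVec_mulVec, h1, Matrix.one_mulVec]
      rw [e1]
      simp only [Matrix.mulVec, dotProduct, mul_add, Finset.sum_add_distrib, Finset.sum_mul,
        _root_.mul_assoc]
    rw [e]
    exact hv i
  have ht' : t ∈ T := by
    have e : (d - y ⬝ᵥ (N *ᵥ x)) * t
        = (y ⬝ᵥ v + d * t) - y ⬝ᵥ (fun k => v k + (N *ᵥ x) k * t) := by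
      have : y ⬝ᵥ (fun k => v k + (N *ᵥ x) k * t) = y ⬝ᵥ v + (y ⬝ᵥ (N *ᵥ x)) * t := by
        simp only [dotProduct, mul_add, Finset.sum_add_distrib, Finset.sum_mul,
          _root_.mul_assoc]
      rw [this, sub_mul]
      abel
    have h3 : (d - y ⬝ᵥ (N *ᵥ x)) * t ∈ T := by
      rw [e]
      exact T.sub_mem ht (dot_mem T hy hz)
    have h4 := T.mul_mem hu h3
    rwa [← _root_.mul_assoc, hus, _root_.one_mul] at h4
  refine ⟨fun k => ?_, ht'⟩
  have := T.sub_mem (hz k) (T.mul_mem (hNx k) ht')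
  rwa [add_sub_cancel_right] at this

end abstract_lin

variable {ι κ : Type} [Fintype ι] [Fintype κ] [DecidableEq ι] [DecidableEq κ]
variable {γ δ : Γ} [DecidableEq Γ]
variable {c}

/-- Closure property of a subring under inverses of homogeneous elements. -/
def Clo (T : Subring c.KK) : Prop :=
  ∀ (γ : Γ) (x y : c.KK), x ∈ c.grad γ → x ∈ T → x ≠ 0 → x * y = 1 → y * x = 1 → y ∈ T

lemma isUnit_of_grad (hi : DirectSum.IsInternal c.𝒜) {x : c.KK} (h : x ∈ c.grad γ)
    (h0 : x ≠ 0) : IsUnit x := by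
  obtain ⟨n, p, rfl⟩ := exists_el h
  exact isUnit_el hi p h0

lemma NS.schur' (hi : DirectSum.IsInternal c.𝒜) (M : c.NS κ) {f : κ → R} {x : κ → R} {d : R}
    (hf : ∀ k, f k ∈ c.𝒜 (γ * (M.β k)⁻¹)) (hx : ∀ k, x k ∈ c.𝒜 (M.α k * δ⁻¹))
    (hd : d ∈ c.𝒜 (γ * δ⁻¹)) :
    c.phi hi d - (fun k => c.phi hi (f k)) ⬝ᵥ (M.inv *ᵥ fun k => c.phi hi (x k))
      ∈ c.grad (γ * δ⁻¹) ∧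
    (c.phi hi d - (fun k => c.phi hi (f k)) ⬝ᵥ (M.inv *ᵥ fun k => c.phi hi (x k)) = 0 ↔
      c.Sing (fromBlocks M.A (Matrix.of fun k _ => x k : Matrix κ Unit R)
        (Matrix.of fun _ k => f k : Matrix Unit κ R) (sc d))) :=
  M.schur hi (f := (Matrix.of fun _ k => f k : Matrix Unit κ R))
    (x := (Matrix.of fun k _ => x k : Matrix κ Unit R)) (fun _ k => hf k) (fun k _ => hx k) hd

lemma minors (hi : DirectSum.IsInternal c.𝒜) (T : Subring c.KK)
    (hT : ∀ r, c.phi hi r ∈ T) (hC : Clo T) (A : Matrix ι ι R) (α β : ι → Γ)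
    (hA : c.Hm A α β) (hker : ∀ v : ι → c.KK, (A.map (c.phi hi)) *ᵥ v = 0 → v = 0) (r : ℕ) :
    r ≤ Fintype.card ι → ∃ (κ : Type) (_ : Fintype κ) (_ : DecidableEq κ) (e f : κ → ι),
      Fintype.card κ = r ∧ Function.Injective e ∧ Function.Injective f ∧
      ¬ c.Sing (A.submatrix e f) ∧ WW T ((A.submatrix e f).map (c.phi hi)) := by
  induction r with
  | zero =>
    intro _
    refine ⟨Empty, inferInstance, inferInstance, Empty.elim, Empty.elim, rfl,
      fun a => a.elim, fun a => a.elim, ?_, fun v _ j => j.elim⟩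
    have : A.submatrix (Empty.elim : Empty → ι) (Empty.elim : Empty → ι) = 1 := by
      ext a
      exact a.elim
    rw [this]
    exact not_sing_one
  | succ r ih =>
    intro hr
    obtain ⟨κ, _, _, e, f, hcard, he, hf, hns, hW⟩ := ih (by omega)
    let M : c.NS κ := ⟨A.submatrix e f, fun k => α (e k), fun k => β (f k),
      fun i j => hA (e i) (f j), hns⟩
    let φ := c.phi hi
    have m1 : (A.submatrix e f).map φ * M.inv = 1 := M.mul_inv hi
    obtain ⟨j0, hj0⟩ : ∃ j0, ∀ k, f k ≠ j0 := by
      by_contra hcon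
      push Not at hcon
      have := Fintype.card_le_of_surjective f hcon
      omega
    have hsch := fun i => M.schur' hi (γ := α i) (δ := β j0) (f := fun k => A i (f k))
      (x := fun k => A (e k) j0) (d := A i j0) (fun k => hA i (f k)) (fun k => hA (e k) j0)
      (hA i j0)
    let z : κ → c.KK := M.inv *ᵥ fun k => φ (A (e k) j0)
    obtain ⟨i0, hi0⟩ : ∃ i0, φ (A i0 j0) - (fun k => φ (A i0 (f k))) ⬝ᵥ z ≠ 0 := by
      by_contra hcon
      push Not at hcon
      have := hker (fun j => (∑ k, if f k = j then z k else 0) - if j = j0 then 1 else 0) (by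
        funext i
        change ∑ j, φ (A i j) * ((∑ k, if f k = j then z k else 0) - if j = j0 then 1 else 0) = 0
        have h3 := hcon i
        change φ (A i j0) - ∑ k, φ (A i (f k)) * z k = 0 at h3
        simp only [mul_sub, Finset.sum_sub_distrib, Finset.mul_sum, mul_ite, mul_zero, mul_one,
          Finset.sum_ite_eq', Finset.mem_univ, if_true]
        rw [Finset.sum_comm]
        simp only [Finset.sum_ite_eq, Finset.mem_univ, if_true]
        rw [← neg_sub, h3, neg_zero])
      have h4 := congrFun this j0
      simp [hj0] at h4
    have hi0' : ∀ k, e k ≠ i0 := by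
      rintro k rfl
      apply hi0
      have : (fun l => φ (A (e k) (f l))) ⬝ᵥ z
        = ((A.submatrix e f).map φ *ᵥ (M.inv *ᵥ fun k => φ (A (e k) j0))) k := rfl
      rw [this, Matrix.mulVec_mulVec, m1, Matrix.one_mulVec, sub_self]
    have hblk : A.submatrix (Sum.elim e fun _ : Unit => i0) (Sum.elim f fun _ : Unit => j0) =
        fromBlocks (A.submatrix e f) (Matrix.of fun k _ => A (e k) j0 : Matrix κ Unit R)
        (Matrix.of fun _ k => A i0 (f k) : Matrix Unit κ R) (sc (A i0 j0)) := by
      ext (i | i) (j | j) <;> rfl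
    refine ⟨κ ⊕ Unit, inferInstance, inferInstance, Sum.elim e fun _ => i0,
      Sum.elim f fun _ => j0, by simp [hcard], ?_, ?_, ?_, ?_⟩
    · exact he.sumElim (Function.injective_of_subsingleton _) (fun k _ => hi0' k)
    · exact hf.sumElim (Function.injective_of_subsingleton _) (fun k _ => hj0 k)
    · rw [hblk]
      exact fun hs => hi0 ((hsch i0).2.2 hs)
    · intro v hv
      have key := ww_block T ((A.submatrix e f).map φ) M.inv m1 (fun k => φ (A (e k) j0))
        (fun k => φ (A i0 (f k))) (φ (A i0 j0)) (fun k => hT _) (fun k => hT _) (hT _) hW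
        (fun hs => by
          obtain ⟨u, hu⟩ := isUnit_of_grad hi (hsch i0).1 hi0
          refine ⟨↑u⁻¹, hC _ _ _ (hsch i0).1 hs hi0 ?_ ?_, ?_⟩
          · exact (congrArg (· * (↑u⁻¹ : c.KK)) hu.symm).trans u.mul_inv
          · exact (congrArg ((↑u⁻¹ : c.KK) * ·) hu.symm).trans u.inv_mul
          · exact (congrArg ((↑u⁻¹ : c.KK) * ·) hu.symm).trans u.inv_mul)
        (fun k => v (Sum.inl k)) (v (Sum.inr ()))
        (fun k => by
          have := hv (Sum.inl k)
          simp only [Matrix.mulVec, dotProduct, Fintype.sum_sum_type] at this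
          simp at this
          exact this)
        (by
          have := hv (Sum.inr ())
          simp only [Matrix.mulVec, dotProduct, Fintype.sum_sum_type] at this
          simp at this
          exact this)
      rintro (k | k)
      · exact key.1 k
      · exact key.2

lemma full_minor (hi : DirectSum.IsInternal c.𝒜) (T : Subring c.KK)
    (hT : ∀ r, c.phi hi r ∈ T) (hC : Clo T) (A : Matrix ι ι R) (α β : ι → Γ)
    (hA : c.Hm A α β) (hker : ∀ v : ι → c.KK, (A.map (c.phi hi)) *ᵥ v = 0 → v = 0) :
    ¬ c.Sing A ∧ WW T (A.map (c.phi hi)) := by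
  obtain ⟨κ, _, _, e, f, hcard, he, hf, hns, hW⟩ :=
    minors hi T hT hC A α β hA hker (Fintype.card ι) le_rfl
  have he' := (Fintype.bijective_iff_injective_and_card e).2 ⟨he, hcard⟩
  have hf' := (Fintype.bijective_iff_injective_and_card f).2 ⟨hf, hcard⟩
  constructor
  · intro hs
    exact hns ((sing_submatrix (Equiv.ofBijective e he') (Equiv.ofBijective f hf')).2 hs)
  · intro v hv j
    obtain ⟨k, rfl⟩ := hf'.2 j
    refine hW (fun k => v (f k)) (fun i => ?_) k
    have h := hv (e i)
    have e1 : ((A.submatrix e f).map (c.phi hi) *ᵥ fun k => v (f k)) i =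
        (A.map (c.phi hi) *ᵥ v) (e i) :=
      (Equiv.ofBijective f hf').sum_comp (fun j => c.phi hi (A (e i) j) * v j)
    rw [e1]
    exact h

lemma NS.ker (hi : DirectSum.IsInternal c.𝒜) (M : c.NS ι) (v : ι → c.KK)
    (h : M.A.map (c.phi hi) *ᵥ v = 0) : v = 0 := by
  have := congrArg (M.inv *ᵥ ·) h
  simpa only [Matrix.mulVec_mulVec, M.inv_mul hi, Matrix.one_mulVec, Matrix.mulVec_zero] using this

lemma isUnit_iff (hi : DirectSum.IsInternal c.𝒜) (A : Matrix ι ι R) (α β : ι → Γ)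
    (hA : c.Hm A α β) : IsUnit (A.map (c.phi hi)) ↔ ¬ c.Sing A := by
  constructor
  · rintro ⟨u, hu⟩
    refine (full_minor hi ⊤ (fun _ => trivial) (fun _ _ _ _ _ _ _ _ => trivial) A α β hA
      fun v hv => ?_).1
    rw [← hu] at hv
    have := congrArg ((↑u⁻¹ : Matrix ι ι c.KK) *ᵥ ·) hv
    simpa only [Matrix.mulVec_mulVec, Units.inv_mul, Matrix.one_mulVec, Matrix.mulVec_zero]
      using this
  · intro hs
    let M : c.NS ι := ⟨A, α, β, hA, hs⟩
    exact ⟨⟨_, _, M.mul_inv hi, M.inv_mul hi⟩, rfl⟩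

lemma el_mem_of (hi : DirectSum.IsInternal c.𝒜) (T : Subring c.KK)
    (hT : ∀ r, c.phi hi r ∈ T) (hC : Clo T) (p : c.Pre ι γ) : el p ∈ T := by
  let M := p.toNS
  have hW := (full_minor hi T hT hC M.A M.α M.β M.hA (M.ker hi)).2
  have e0 : el p = (p.f.map (c.phi hi) * (M.inv * p.x.map (c.phi hi))) () () := by
    rw [← M.el_eq hi p.hf p.hx]
    exact el_inter (Inter.toNS p) (by simp)
  have hz : ∀ k, (M.inv *ᵥ fun k => c.phi hi (p.x k ())) k ∈ T := by
    refine hW _ fun i => ?_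
    rw [Matrix.mulVec_mulVec, M.mul_inv hi, Matrix.one_mulVec]
    exact hT _
  rw [e0]
  exact dot_mem T (y := fun k => c.phi hi (p.f () k)) (fun k => hT _) hz

lemma epic (hi : DirectSum.IsInternal c.𝒜) (T : Subring c.KK)
    (hT : ∀ r, c.phi hi r ∈ T) (hC : Clo T) : T = ⊤ := by
  rw [eq_top_iff]
  intro x _
  induction x using kk_induction with
  | zero => exact T.zero_mem
  | hel n γ p => exact el_mem_of hi T hT hC p
  | add x y hx hy => exact T.add_mem (hx trivial) (hy trivial)

end final

end GCtx

/-- Every gr-prime matrix ideal `P` of a `Γ`-graded ring `R` is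
the gr-singular kernel of a `Γ`-graded epic `R`-division ring: there exist a
`Γ`-graded division ring `K` and a homomorphism of `Γ`-graded rings `φ : R → K`
such that the only subring of `K` containing `φ(R)` and closed under inverses of
its own nonzero homogeneous elements is `K` itself, and
`P = {A ∈ 𝔐(R) : A^φ is not invertible over K}`. -/
theorem grPrimeMatrixIdeal_is_singular_kernel
    {Γ : Type u} [Group Γ] [DecidableEq Γ] {R : Type v} [Ring R]
    (𝒜 : Γ → AddSubgroup R)
    (hinternal : DirectSum.IsInternal 𝒜)
    (hone : (1 : R) ∈ 𝒜 1)
    (hmul : ∀ {γ δ : Γ} {x y : R}, x ∈ 𝒜 γ → y ∈ 𝒜 δ → x * y ∈ 𝒜 (γ * δ))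
    (P : Set (SqMat R)) (hP : IsGrPrimeMatrixIdeal 𝒜 P) :
    ∃ d : GrDivRingHom Γ R 𝒜,
      (∀ T : Subring d.K,
          Set.range ⇑d.φ ⊆ (T : Set d.K) →
          (∀ (γ : Γ) (x y : d.K), x ∈ d.grading γ → x ∈ T → x ≠ 0 →
            x * y = 1 → y * x = 1 → y ∈ T) →
          T = ⊤) ∧
      P = {p : SqMat R | IsHomogSq 𝒜 p.2 ∧ ¬ IsUnit ((p.2).map ⇑d.φ)} := by
  let c : GCtx Γ R := ⟨𝒜, hone, hmul, P, hP⟩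
  have hi : DirectSum.IsInternal c.𝒜 := hinternal
  refine ⟨{ K := c.KK
            grading := c.grad
            internal := c.grad_internal
            one_mem := ?_
            mul_mem := fun hx hy => GCtx.grad_mul hx hy
            isUnit_of_ne := fun hx h0 => GCtx.isUnit_of_grad hi hx h0
            φ := c.phi hi
            map_mem := ?_ }, ?_, ?_⟩
  · rw [← GCtx.el_one]
    exact GCtx.el_mem _
  · intro γ r hr
    rw [GCtx.phi_apply hi hr]
    exact GCtx.el_mem _
  · intro T hT hC
    exact GCtx.epic hi T (fun r => hT ⟨r, rfl⟩) hC
  · ext ⟨n, A⟩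
    constructor
    · intro h
      obtain ⟨α, β, hA⟩ := hP.subset_homog _ h
      refine ⟨⟨α, β, hA⟩, fun hu => ?_⟩
      exact (GCtx.isUnit_iff (c := c) hi A α β hA).1 hu ((GCtx.sing_fin (c := c) A).2 h)
    · rintro ⟨⟨α, β, hA⟩, hu⟩
      by_contra hs
      exact hu ((GCtx.isUnit_iff (c := c) hi A α β hA).2
        fun h => hs ((GCtx.sing_fin (c := c) A).1 h))
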